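/- Let n = 135 and let x, y ∈ S_135 be the permutations given in the context, with z = (x·y)⁻¹. Then (x, y, z) is a nice triple; the cycle types of x, y, z are 9^15, 2^52 and 4^30·2^6 respectively; and the subgroup ⟨x, y⟩ of S_135 has cardinality 174182400 (the order of the simple group O+(8,2)). -/

import Mathlib

/-- `permInd s` = (sum of the cycle type of `s`) − (number of entries of the cycle type of `s`),
i.e. `n` minus the number of cycles of `s` when fixed points are counted as cycles. -/
def permInd {n : ℕ} (s : Equiv.Perm (Fin n)) : ℕ :=
  s.cycleType.sum - Multiset.card s.cycleType

/-- A `MulAction` is preprimitive if it is pretransitive and every block is trivial. -/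
def IsPreprimitive (G : Type*) (X : Type*) [Group G] [MulAction G X] : Prop :=
  MulAction.IsPretransitive G X ∧
    ∀ B : Set X, MulAction.IsBlock G B → MulAction.IsTrivialBlock B

/-- A triple `(x, y, z)` of permutations in `S_n` is *nice*:
(i) `x * y * z = 1`; (ii) `G = ⟨x, y⟩` is neither the alternating nor the symmetric group;
(iii) `G` acts primitively on `Fin n` and is almost simple; (iv) the triple has genus 0;
(v) the triple is rigid in `G`; (vi) `x`, `y`, `z` lie in rational conjugacy classes of `G`. -/
def IsNice {n : ℕ} (x y z : Equiv.Perm (Fin n)) : Prop :=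
  x * y * z = 1 ∧
  (Subgroup.closure {x, y} ≠ alternatingGroup (Fin n) ∧
    Subgroup.closure {x, y} ≠ ⊤) ∧
  IsPreprimitive (Subgroup.closure {x, y}) (Fin n) ∧
  (∃ S : Subgroup (Subgroup.closure {x, y}), S.Normal ∧ IsSimpleGroup S ∧
    (∃ a b : S, a * b ≠ b * a) ∧
    Subgroup.centralizer (S : Set (Subgroup.closure {x, y})) = ⊥) ∧
  permInd x + permInd y + permInd z = 2 * (n - 1) ∧
  (∀ x' y' z' : Equiv.Perm (Fin n),
    x' * y' * z' = 1 →
    Subgroup.closure {x', y'} = Subgroup.closure {x, y} →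
    (∃ g ∈ Subgroup.closure {x, y}, g * x * g⁻¹ = x') →
    (∃ g ∈ Subgroup.closure {x, y}, g * y * g⁻¹ = y') →
    (∃ g ∈ Subgroup.closure {x, y}, g * z * g⁻¹ = z') →
    ∃ g ∈ Subgroup.closure {x, y},
      g * x * g⁻¹ = x' ∧ g * y * g⁻¹ = y' ∧ g * z * g⁻¹ = z') ∧
  ∀ g ∈ ({x, y, z} : Set (Equiv.Perm (Fin n))), ∀ k : ℤ,
    Int.gcd k (orderOf g) = 1 →
    ∃ h ∈ Subgroup.closure {x, y}, h * g * h⁻¹ = g ^ k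

/-- The permutation given by a list of (disjoint) cycles, each written as a list of points. -/
def permOfCycles {n : ℕ} (cs : List (List (Fin n))) : Equiv.Perm (Fin n) :=
  (cs.map List.formPerm).prod

def x : Equiv.Perm (Fin 135) := permOfCycles [
  [1, 94, 65, 71, 134, 80, 107, 98, 4],
  [2, 104, 58, 121, 97, 116, 88, 8, 23],
  [3, 69, 36, 32, 29, 73, 102, 128, 106],
  [5, 14, 124, 105, 67, 18, 49, 117, 34],
  [6, 28, 100, 41, 135, 31, 48, 109, 17],
  [7, 133, 112, 53, 91, 15, 25, 122, 129],
  [9, 62, 99, 96, 131, 77, 10, 81, 52],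
  [11, 56, 110, 13, 115, 111, 95, 89, 54],
  [12, 64, 113, 108, 20, 76, 50, 22, 55],
  [16, 61, 83, 118, 75, 66, 39, 35, 132],
  [19, 85, 68, 126, 40, 125, 74, 130, 43],
  [21, 47, 79, 78, 72, 84, 24, 37, 57],
  [26, 38, 70, 90, 92, 103, 63, 120, 44],
  [27, 119, 127, 42, 87, 82, 101, 93, 45],
  [30, 59, 86, 51, 33, 60, 123, 46, 114]]

def y : Equiv.Perm (Fin 135) := permOfCycles [
  [3, 118],
  [4, 110],
  [5, 132],
  [7, 36],
  [9, 33],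
  [10, 46],
  [12, 112],
  [13, 129],
  [16, 65],
  [17, 106],
  [20, 113],
  [21, 107],
  [22, 55],
  [25, 61],
  [26, 27],
  [28, 30],
  [29, 37],
  [31, 109],
  [32, 98],
  [35, 130],
  [40, 42],
  [43, 99],
  [44, 125],
  [45, 90],
  [47, 49],
  [50, 91],
  [51, 93],
  [52, 60],
  [54, 56],
  [58, 116],
  [59, 128],
  [62, 82],
  [63, 73],
  [64, 69],
  [66, 96],
  [67, 78],
  [71, 117],
  [72, 105],
  [74, 124],
  [75, 135],
  [76, 83],
  [77, 121],
  [80, 134],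
  [84, 120],
  [85, 87],
  [86, 103],
  [88, 104],
  [89, 94],
  [95, 122],
  [97, 114],
  [100, 131],
  [119, 127]]


/-! ### Table lookups, designed for evaluation by the kernel -/

/-- Entry number `i` of a table of bytes. -/
def Ap (N i : ℕ) : ℕ := Nat.mod (Nat.shiftRight N (Nat.mul 8 i)) 256

def bitB (N k : ℕ) : Bool := Nat.beq (Nat.mod (Nat.shiftRight N k) 2) 1

def allB (n : ℕ) (f : ℕ → Bool) : Bool :=
  Nat.rec true (fun k ih => cond (f k) ih false) n

def anyB (n : ℕ) (f : ℕ → Bool) : Bool :=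
  Nat.rec false (fun k ih => cond (f k) true ih) n

theorem allB_spec {n : ℕ} {f : ℕ → Bool} (h : allB n f = true) : ∀ i < n, f i = true := by
  induction n with
  | zero => intro i hi; omega
  | succ k ih =>
    have h' : cond (f k) (allB k f) false = true := h
    cases hk : f k with
    | false => rw [hk] at h'; simp at h'
    | true =>
      rw [hk] at h'
      intro i hi
      rcases Nat.lt_succ_iff_lt_or_eq.mp hi with h1 | h1
      · exact ih h' i h1
      · rw [h1]; exact hk

theorem anyB_spec {n : ℕ} {f : ℕ → Bool} (h : anyB n f = true) : ∃ i < n, f i = true := by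
  induction n with
  | zero => exact absurd h (by simp [anyB])
  | succ k ih =>
    have h' : cond (f k) true (anyB k f) = true := h
    cases hk : f k with
    | false =>
      rw [hk] at h'
      obtain ⟨i, hi, h2⟩ := ih h'
      exact ⟨i, by omega, h2⟩
    | true => exact ⟨k, by omega, hk⟩

/-- `imp a b` : boolean implication, lazy in the second argument. -/
def impB (a b : Bool) : Bool := cond a b true

theorem impB_spec {a b : Bool} (h : impB a b = true) (ha : a = true) : b = true := by
  subst ha; exact h

theorem beq_spec {a b : ℕ} (h : Nat.beq a b = true) : a = b := Nat.eq_of_beq_eq_true h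

/-- The function `f` on natural numbers describes the permutation `g`. -/
def RepP (g : Equiv.Perm (Fin 135)) (f : ℕ → ℕ) : Prop := ∀ i : Fin 135, (g i).val = f i.val

theorem RepP.mul {g h : Equiv.Perm (Fin 135)} {f k : ℕ → ℕ} (hg : RepP g f) (hh : RepP h k) :
    RepP (g * h) (fun i => f (k i)) := by
  intro i
  show (g (h i)).val = _
  rw [hg, hh]

theorem RepP.one : RepP 1 (fun i => i) := fun _ => rfl

theorem RepP.congr {g : Equiv.Perm (Fin 135)} {f k : ℕ → ℕ} (hg : RepP g f)
    (h : allB 135 (fun i => Nat.beq (f i) (k i)) = true) : RepP g k := by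
  intro i
  rw [hg i]
  exact beq_spec (allB_spec h i.val i.isLt)

theorem RepP.ext {g h : Equiv.Perm (Fin 135)} {f k : ℕ → ℕ} (hg : RepP g f) (hh : RepP h k)
    (e : allB 135 (fun i => Nat.beq (f i) (k i)) = true) : g = h := by
  apply Equiv.ext; intro i; apply Fin.ext
  rw [hg.congr e i, hh i]

def itA (f : ℕ → ℕ) (m i : ℕ) : ℕ := Nat.rec i (fun _ ih => f ih) m

theorem RepP.pow {g : Equiv.Perm (Fin 135)} {f : ℕ → ℕ} (hg : RepP g f) (m : ℕ) :
    RepP (g ^ m) (itA f m) := by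
  induction m with
  | zero => exact RepP.one
  | succ k ih => rw [pow_succ']; exact hg.mul ih

/-- The product of a word in two letters. -/
def wd (a b : Equiv.Perm (Fin 135)) : List Bool → Equiv.Perm (Fin 135)
  | [] => 1
  | c :: l => cond c a b * wd a b l

def fwd (A B : ℕ) : List Bool → ℕ → ℕ
  | [], i => i
  | c :: l, i => Ap (cond c A B) (fwd A B l i)

theorem RepP.word {a b : Equiv.Perm (Fin 135)} {A B : ℕ} (ha : RepP a (Ap A)) (hb : RepP b (Ap B))
    (l : List Bool) : RepP (wd a b l) (fwd A B l) := by
  induction l with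
  | nil => exact RepP.one
  | cons c l ih =>
    cases c
    · exact hb.mul ih
    · exact ha.mul ih

theorem wd_mem {K : Subgroup (Equiv.Perm (Fin 135))} {a b : Equiv.Perm (Fin 135)}
    (ha : a ∈ K) (hb : b ∈ K) (l : List Bool) : wd a b l ∈ K := by
  induction l with
  | nil => exact K.one_mem
  | cons c l ih =>
    cases c
    · exact K.mul_mem hb ih
    · exact K.mul_mem ha ih

def tX : ℕ := 0x5070104d2b076a2a284a692e81612c7f4b22586f1e6c355f0d11146203433a3f805d296004748359412d670f5c3608523344187665346b4e480a3242826654865a247e122747717863537b5679156e0c0b5b092116756d4f721b1a1357007d2346392084053c1d303b496477267a2502372f4c5531063d197c734038513e17851c0e0145685e1f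
def tY : ℕ := 0x50850564230d3b777e2c4a7b5f4d547f03473a7361140c6f041f6c15114858566665832b2072427a59335c322d5e68556757784c3e51864f437953007c3f69754640444e60104549521934807439361638353c5d5b2f30310a5a7d6328292a27261d07822209626d1c251e1a1b3d1817376b7113126a410f0e81700b2e21082406846e7602014b
def tA1 : ℕ := 0x22202b276959802a7e577c0953586626324f1e075124706f0b6d4c505682686778633b652f0a135f5e5d1b5b5a81797d6a55437a44726b754e296c451a39123d464b52541f3635333c473e640849380c4140343f763111622e2118847f4d288377257123862d854274041c5c4a192c170f15146048300e161001376e617b3a7303051d06020d00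
def tB1 : ℕ := 0x5e320402346a1f551b222f600b3c445d1c12086e6d0c075b0f49370310153a242e1e065336171162271a727026596151572b4e662a56180e052185094b205c415219137c7643404f7d713346634750815f6c3b0a4c016439683f654a823d67282c548631424d48291d5a3e2d780d455814698477253035237e38806f837f747a7b756b16797300
def tA2 : ℕ := 0x863e310e77325e0d257d62527a67788227755a73544d702e503f1b4b1f3b13791d1a06637c61144780304c2374100249421172087b356e214e715c6b4a57415f4616090c5648376d851c3c693a39384036512b1781845d056f2d2c342a292876037e245b0a4f206a19663d6c651e1833451560681255590b837f430f22445307642f0426580100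
def tB2 : ℕ := 0x5e024476344842775c3362136e6769635156700b32576b317f5f7d7820152e71082c037a413c041f61641c3a553f0a7c0c0d2d0616407485494e0e60231079431d197b726d543d753724814b1435736c39224a8359841a0526865d3b52123e2918364c5b2f2847803038177e6607461b6511506825826a45215a4d6f272a1e53094f2b0f580100
def tA3 : ℕ := 0x805809272b4156824c177c6850793b633542700f81494b840d477d7820156f4d532c267a483c046a61063d3a116d2262437f2d6445375a3e574e83145b59670c661e52543f721c754024326b6051731b390a4a0e1031652f038630697b12852918365c2305285f5e5d3833251d07466c1a556e137e771f164f74712e762a19084421340b020100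
def tB3 : ℕ := 0x2d83662f8261861112857c642b561555401f5b03590c3a2c604117695f636580463031236a1074623f52334a506d6c43486b4e6f08397a0e674d227034422049181e067947321c715c4f72780d76163537366e3e3c53684c0f547b7f842705282a3d1b777d21575e2e190a251d4426580b3b4b13295a81732404753851095d1a077e1445020100
def tA4 : ℕ := 0x487d84276359797f2f177c2c5056692b5171700b326d4b095b755878626b66673168267a803c6e5772061b7455497e204e822d2a2e255a1c6a4328600d414d0c6f521e541f613e470a3381151435733d39404a0e5e537b4c3886303b65126c2918764f7721835f1007032437165d46851911041322233f1d5c3a424536641a440805340f020100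
def tB4 : ℕ := 0x202784227861567f4c127c26694e82111b594b1e1f4160646e3c6c5a6a7a686753656f556281704d0c08335b6b75585480635766523d500a795f7e74044943422c072e48477124323e516d3b3a1c0b3735360d5c3f2a0928442d462331292f857b0e402b8317867273063976030f1821161514137d77101925345e384f305d451d054a1a020100
def tA5 : ℕ := 0x5422847d82716a7f6c837c6f5a79507733616e734781707b74497e6380552a6765662c6b4e755b2d100351607a412848566986531e5c7835624d4c4b4a6d5772262e0b2032590a1f1c1b3c1104390725244f34764231182f455f641568175812463736238521433f52163e3d191a30291d2b0d13273b5e080e140c4440090f3806053a5d020100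
def tB5 : ℕ := 0x868384858275627f58227c647a5650235c815b7342614b2c604928554e636667682a7b6980716e2d100f76745a597e43796b54311e3378366a4d2f70346d2032464538577241403f1c3d3c2b0d3944254f244a514753184c2e5f6f3b65176c27263735777d21481f52163e1b1a1930291d11041312155e5d0e3a0c070a09030b06051408020100
def tD : ℕ := 0x725b1d8673703a520b6e3963857613576a48426783430f3f5a1c123b79153d82681b1f41564b47783c774a7a7d2c275d515932802d621e6c145075030d024c2e2874362f457b692b5e663e0a530c460e1a190434224e0671607f556f653038247e375820540908114d17002a440716840540315f4f644981255c7c266b0123352918336110216d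
def tH : ℕ := 0x560071512406251920806e476d69685b400d75276278308453771a7b15732258540f1b6072124d3d3c7a611c3a760585866a2b373583214428095c6c034e4a1e0248455f4c2e67173e325e410e7d102642110a6b3f382d135007791d817f4916087e180c6f043965012f5d70741f55432c824666362a14290b4b5a2363347c6452593b4f313357
def tJ : ℕ := 0x807173836f0e8650121b5f19743d644640567a845985458201583c66392308336b5d78131c252c7c36652d161a726d4f7552273455327f57284924042b4d480577703143290a762f21796c15306a0b375e0c536751443a3f0f5c604a26424e542a614c69223e1f201806627d5a7b1e025b3b09637e07102e81033538411468111d474b0d176e00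
def tNB : ℕ := 0x1379214835c32f09d313ae267546b3075e0293a3fe282410a59200aaead6dd7b7ed440408c11e0c19cb5bdcf76ed19d03b3c9502b020020bc47f7a024d7555fbacbaded4024ae39a1a51ea0919c70a138bb6d53cf76c050229e162c6dd091b07736c9a6e7baa4099cc75d2b466193608d61444bb957eb629229545656848c885ca660e9eb6e7956f541455beab984b154605c5480cdcefd56c4895222b161b68b87dadd02a1a534f73d46962195485a9d47d380510e38766dca9fa45041490a7eae1ca1c9cbec2df5d484ec50269606639b185d6898ad5aca6c7149cf724902002f779ae6574b6d75976c921087e632414905b5730d56a671cce5238d3986f3580612cfb0b04ba2e2facd3a5488693d705449881472b7d7fa153c82fc68d7372506c2681d5c282a9029956d8cc41ebafdbaa00d940643275faac8bc7a0f95d6bae42231110412e0c72aadf5a997b8ad381a79ba911c9014a3e075073d15edb738eea09d98a26200000fcbdd11f76fba20c8d659bd6aa64d0ac1317b832d0c979a1b46f191a34eb24496066c50c54c9ff7177a02ba28f4a5d6194349250934faf682a699ba9946946bb23649881bb96ac60d7a86a234be8e8a4fa35592148c97efe16a5e80c2af82328d1f466608c111c7c4daacb34d4e194b5a0ea3f2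1d4b883b052d31ad5e51f76b044527a2e2c660dc4224335b72499ae21583b94e73f13a0612c07b6d5a558d40edf282d1d457d135aa2b4162340d6435e7199583772a75e1383e2d02456ba7ac899d160055cdce57d72ce962646b00f792b741802f1a31be1e54527976c840a8e158cd1617df22c89eec52c458e3801a35a68b4d4719e754a55473f40ba4f89f15409c6a64509ab69ca54deb60d6bf523a0641c017abb11aeb51468df324adfc1b10c4a82b1646ada3991e59a4f23595c2361281c38cbacf30b5994b946aa5e5e8b181e471355119fa0699c84e94ea6da239e5b19aa033913cc2215653bf28746d905671b7d64cb12a0311e1790ebfcb2d25000fac398119595731b8a7f46701a6fe223290116b9468827171587b9b1b3c726356f4229ec77d97019633445a341bf172fa0625437d642887824cad6481af721ad2e756c161e3a3551083da9e20db9b69eba01d50e0ff856dd88400ca4e8bbbb4463c913a1e64d2b793240a580b4c7746743acc453e3a7381157974afa8dc84f1ec23b604681aec65ce278787ea2d0c7162abc30222e5a3a2d5b16c0fb324dd2c2b534014a1f0f9396a94f421954791405624efeb2ef0a03477f50484c624f246e9214f66a70d34738e131f732ad99cb8591fc1306f6b150c502e17d700a9f4da0ec8b1e04d9a5acd48835a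173b63832d46b691ae217df531d844d37400ec61b75cf16f16c21a898b6a8182bae690a3c4fb8dacc688190115574cda97a19289d7332575a53940469601d7cce16b5188e9f53080cee5ec4af0ea14ba5063e5ee8da0d6277534ec333ee88aa01e070d46a45c6d196708475bc5ce1e57032b312117a15cedd1240630fedc321f36a2d82a95234a1fa9c951133c2d22f92c500cad4a435fef0663ba9753a2ea50a5f0d7c886aa578cc82d24d61163db9c972e8527672406609b3cbc0750e11ea82b61de73fac411304cca39bc8798a69419aa8a649bba2a848cf5caa171d09fa56a475bca05c346f4448b01df770550bb814ae1a375acc42d3e040cce36516bb0bda1c817795bd8323ad3ba81562168fa0a6b8002383fc23e06fdf904ddfbf2d71c1a000420a6f8bfa9076bca4087cfe9266ee00621bac8f72c319db04137108e176c5c7481f1c7bb40dac16b6de20226a246695cf449b5687f64083bc5bb0d4056fa2da0194abb85e71db865686c062842a16daf4f32144f9616ef70a4106dadc73a016ddd98e06a49819e66ce8d948310d0ab602f2fd731274e878889be2984eebd17916142f24fd14d070193f2c8ceb3dcba18171a20ba018bc36cb6409ec7725cdc87c42be014d3272b476c85bcf809f0038286e3ef3a1b342643dd48a778a0ea7019b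72068a27d02d372e6893b50a460dc4defee4a852620c2dd55e0f3195301db9c98e55836904bbc4053eae5ba3a43a5bb40d50ab67c156d9c828ebf0549231723455be57259a0a30fe674481b97403c60f02954599d599d7f331c40213d37c43c530e77a519fc0161a1f31bb434eb4344187598563051a69c2672734aba0c9d2e8e87d66b9cc752e09b70640f37418c9de0ea81c1e12d46b95a73308a9a8bf88c052dbd86c2c9cce5c33d6a0c43f13d1672821fb051c6b0b7932bc1851abb18fc54f21a1c8350d4a0681d53e3f781defad7ac0cc8e340d0078ab181ebbae840ee95bcb90098cd570701ee817f38432a67bb222c0ceb048b43a4f63ded7084ac2a5a671ed63882222bc7a4c2cbf4da01036cf1baf5e0ed805503aa51c5c18bbe06f3745b40da0c376523435d80e3fc66ce825f5e0127c4da0fe701689a242707eb6244d74700329396d570a0fa13f310d9136bbb1f1897261316ee8c50e073d1137e9014ac2ba816ca7a5797f038f920f202b4bf5235cd9cd1e0c40b3a23871f309986cdc424dd3173c7182dca78a31f1c0398947b43492ac2e9eb01ed1cb9724f1f29011212e7b1ba1c74669ce6f6030c05e3d980d4dd1baaa513015c7dcfe1805dcde3c018426f94064cec82bb3fd3c02f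5d00e3594897ac27878821f01d860d11e3caf4bc1ec877d154307ed106c0253827cf9bf1bc9e0033a7837f1734b081ec6941797c68195323107f4b8834cef0205a31ebd7a3d21c9ac847ae1fb84a1ff6e07f09cc183823a004c8775e36ec1382af7d003ad058191e97c0f4208d5ae3af6daf40dc062a6c70383744f412b6876df7f39a2c19c0d6c1d150032a9983730412ef0cf7bc02c62d9865ee43c4d033fe5ef1406158fcdec007f415d674802423f1f2c8c17801abef78a00072d7d27e0617dcc0363df6596aed845dc00e27067a2206b28face9ff83e7421c21af00cd009950d42f0ac13eb05e3cfbf8203b8e27c81e2413f3caf703460756167c7dfb8000ce640616cffc1b1f0f753ae129178351c8001998907d73b7f6f0f6dda335362c51050080c847d36c0fbcef003ddc3cfa346926a08400342d32fefc8e58c102fcfdc07cf0d4042417def809ffc85f971480803bfcf01a602204797b76e8fcef16f8e9c14280980333011148d99cb792c2d0c700d135c48677aabda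
def tINC : ℕ := 0x80000088102501080188200000080800400080020034c04000404008000048080012986002181400004220000000000000000000000000000810210003c200018044420410000020060080c008440c00080002002008000000100c104041400500000401020100200028480084400100210a040000000808800000100005c00000280002012028001480000044080040500200481001400000000013100000480202100005c04200000018002a400000000042001c20000310000008000010001020002000000080361138408000800a1080160000004100010020800480000000820414420010a04040004000008400100000000152150001010800220000c0000000078000083000004000100a9000000048a1003000108100040208041000006000004020040000402a90c000000802026a884000041000804000040020100000002008902000000000020055040c00040200280104480004050202000100a020000000000000000000018c0c8102002030026008000034040100010812800004100100011420004401240040021000004408008000100000000000000040200000c20e0442620010662000400280000004003010000005004082410040204000001020520200080014910020000001020010810020010042006400100100000052240851000000008000180b436c00000000000000000002040100000000600068000000558000000010190400000011200100000001e1000200c00a0202108480001029000080000c10010004000020848000e082040000000040043000200200901204800000500050040204010000000101002000c00214004001000424021000c92a000000042000000031200000201021600000004080420052000121000000011100320a010000400000010222004000404c0004244028008420000088000100000000000000000000000c0018304c0403803024201c00c1800500000004042000000000000400100600002800002250000083200800000000020a028c8000000000e010008c00204140a8448000000006400000800800000000000020028031014800000c0880064000800000001004008011000aa1404020000001204001410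1000404089002000a0021000000010109000995010008000080000000008100010a1000000000d4500080820280089012810120000480000040100000000013000002040000005c000080400914448408008004102020200040000808400010940288020222000000081040080000002040000004022408088a1014002000000008418040042080001190020000010020000040000040000080100000073221000282001000005a00018001000e0008810200000520000021001006800021c00000200008100120220428420800000010840400000060040800420840000444001108200000000002108800820010000800060000101580022244140080000002002080010080040101060008000010000041280009004a010000000000200a6000000000b80000801c180000000281140808880000460400010080002000008000120180000c008588000021000024000130040c02812000000040200440001003c808000000200000828000188002003c000008000024200000000410045448069e9100000000000000000010402000200000000683c210010044000000800001132211800800010200000800800400800000038800008041000100002008060844000081400a8080820010000000214008008002c000001000300230001880010100001040020020000050120040008080100450010011600820000000048823100800000400004300010000000a80082000810200228001040380004008200004004310002001000401000404a004200008e00000002801000942020000020080890008a20000000001000020000010405106000023140000040102100000021000028440e800000001000500000a400300000081040440000a0020442004040180482a082001000001008000004000008000200020008c0018800800b0200000000080c00020000080222200815021010000020c0080000922004000042a004000048000040072011000000010302800080001010080000d280080020080c0044000034020000401102000a0200092000000010200414000000000168410001060008004284808015001000021220000000200000209000188200380040082000800404000000000000251a0400013040082000020100000402000106400e8200802020000100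0001006010000064008020000020020c04200000a00410800001003010020000082b0000000400000100000002020401002080d8e0c010841a008000084008020044000000018000080103000000000880204014001220000000c00002041200a0008010a08044068004400801080000ca00000000004002108041108c000000134000a020000010000000010000100000210100000201001b09c0010008138402002000a80000010201000080040103000008050000280005004000a2000400010c00000400c1400090200012002080104000508202000400800008180100000280031055000000004000c1040001005000000000001e00000002830400a8008300000001310614a000000000002040008302840000000020000000110202080802a120000440e08200000008000022180004000000800000004000042800020704840460000060401002c000800008040102400503d041000040a0000403000000000000108000030000c00041140080600801000204040024004080400800808000008300880800001000400080800001000010d810005900000040000008000000004082101c2227040000214020000e000004001028804000100000048020080500440020040401600400000000c43810004000020004a020100800300000200080800c0440088814000004004000060040010100000144414010201000020901000000141001003000080100c080002043000000188080100040004160200041404014000000006202000500022020000882028000112152001010000001000004080423200000000080411d00000000800000001200040000e2002104000060140040019820300000a00810041000080200000001000000002000003b200000088005405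
def tXF : ℕ := 0x7686456d855a6f5284712e835d8274814f807a654c3a7b7f7e7d787c575c24683c797775737270176e28416a436c6b47691a49676664636261605f5e3e3f5b14591f5822565554530a51504e4d4b4a48460c4442402a3d00123b390e3837363534333231302f2d2c2b292726252321201e021d1c1b19181615130710110f0d040b090806050301
def tYF : ℕ := 0x85867f838081828479707269667e646c637562737c607d5e6e5b7758567b53677a5178767450714d6f4a486d46596b426a5540683d65613b4e5f39445d375c365a344b335732543130522d4f2c4c2b4947264543413f3e25203c3a381d291c1e352f192318212e16272a281b1124220f1f150d130b1a09170814061205100e030c0a0107000402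
def tVec : ℕ := 0x2dec30e037c3eb33ea6803fc3babb7bdcccfdb16cd4b9b705787667b67fff621fa76f0f3e7435fa58550c0d73f0be6edaf7329be9248b34a6f25ae9f9d8361413c1a5ae1c10f0a0d820c07755506528042c2994049bab4aa1ea1787d7ea06e283884ceb96024690996948608181cb0a490f5d5122cf98158045d05d20e34d0de1420d9dc021001
def tIdx : ℕ := 0x6900007b00661100006815006300006400005785807e0000625800000000438300070003740004005b001400000b00087524727600000000000000008135425c00537700003123007800003050000018564c0000792f000000005f1700002d294b004a0070003400001e001d0052001600000000000000006d1c5e25493e1037002a2b006b00002c00653b005500006f4e2800000000207d6a6c00000000482260000d000044000f6e003a000038005d00000000714f325100000000613647335a0000467a000026820000097f000084000086120000542700004d2100006705002e00190045001a0073000600130001410a3f3d59401f1b3c390c0e7c020000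
def tPar : ℕ := 0x6996966996696996966969966996966996696996699696696996966996696996
def tXL : ℕ := 0xe1e8171ee2eb141d5c55aaa35f56a9a0646d929b676e9198d9d02f26dad32c25e5ec131ae6ef10195851aea75b52ada46069969f636a959cddd42b22ded72821c5cc333ac6cf303978718e877b728d844049b6bf434ab5bcfdf40b02fef70801c1c8373ec2cb343d7c758a837f768980444db2bb474eb1b8f9f00f06faf30c05e4ed121be7ee11185950afa65a53aca56168979e626b949ddcd52a23dfd62920e0e9161fe3ea151c5d54aba25e57a8a1656c939a666f9099d8d12e27dbd22d24c0c9363fc3ca353c7d748b827e778881454cb3ba464fb0b9f8f10e07fbf20d04c4cd323bc7ce313879708f867a738c854148b7be424bb4bdfcf50a03fff60900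
def tYL : ℕ := 0x61fe63fc65fa67f879e67be47de27fe071ee73ec75ea77e869f66bf46df26ff051ce53cc55ca57c849d64bd44dd24fd041de43dc45da47d859c65bc45dc25fc031ae33ac35aa37a829b62bb42db22fb021be23bc25ba27b839a63ba43da23fa0019e039c059a079819861b841d821f80118e138c158a178809960b940d920f90f16ef36cf56af768e976eb74ed72ef70e17ee37ce57ae778f966fb64fd62ff60c15ec35cc55ac758d946db44dd42df40d14ed34cd54ad748c956cb54cd52cf50a13ea33ca53aa738b926bb24bd22bf20b12eb32cb52ab728a936ab34ad32af30910e930c950a970889168b148d128f10811e831c851a871899069b049d029f00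
def tCyc : ℕ := 0x509060a05020d0a0a030e05010c0d090301070e080507070408000203010c020d040600010607000d0c050c07010d0e0a0b090d06000b0b0608090a020b000c020a030900080c06090e0e010b07080705060e0803040b0e0d0c0a0d040a090c0b0209030e02040e02040d0c050b01080b080a03040905030708070606010504030002010004
def a1 : Equiv.Perm (Fin 135) := wd x y [true, true, false, true, false, true, false]
def b1 : Equiv.Perm (Fin 135) := wd x y [true, true, true, true, true, true, false, true]
def a2 : Equiv.Perm (Fin 135) := wd a1 b1 [false, false, true, false, false, false, false]
def b2 : Equiv.Perm (Fin 135) := wd a1 b1 [false, false, false, false, true, false, false, true, false]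
def a3 : Equiv.Perm (Fin 135) := wd a2 b2 [true, false]
def b3 : Equiv.Perm (Fin 135) := wd a2 b2 [false, true, false, false, true, false, false, false, true, false, true]
def a4 : Equiv.Perm (Fin 135) := wd a3 b3 [false, true, true]
def b4 : Equiv.Perm (Fin 135) := wd a3 b3 [false, false, true, true, true, false]
def a5 : Equiv.Perm (Fin 135) := wd a4 b4 [true, false, true]
def b5 : Equiv.Perm (Fin 135) := wd a4 b4 [false, true, true, true, false]
def eD : Equiv.Perm (Fin 135) := wd x y [false, true] * wd a1 b1 [false, false, true, false, false, true, false, false, false, false, true] * wd a2 b2 [false, false, false, true] * wd a3 b3 [false, false, false] * wd a4 b4 [true, true, false] * wd a5 b5 [true]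
def eH : Equiv.Perm (Fin 135) := wd x y [false, true, true, true, false, true, true, true, false] * wd a1 b1 [false, false, false, false] * wd a2 b2 [false, false, true, false, false, true] * wd a3 b3 [] * wd a4 b4 [true, true, false] * wd a5 b5 [false]
def eJ : Equiv.Perm (Fin 135) := wd x y [] * wd a1 b1 [false, false] * wd a2 b2 [true] * wd a3 b3 [] * wd a4 b4 [true, true] * wd a5 b5 [false]
def cert0 : List ℕ := [0, 1, 62, 63, 150, 218, 132, 133, 34, 35, 78, 192, 12, 212, 70, 71, 262, 263, 57, 6, 7, 264, 265, 260, 154, 155, 200, 60, 138, 139, 32, 33, 10, 86, 87, 20, 21, 242, 118, 119, 72, 73, 128, 122, 123, 130, 28, 38, 162, 92, 194, 172, 173, 64, 65, 14, 226, 227, 167, 50, 142, 143, 248, 249, 170, 171, 104, 105, 232, 233, 102, 103, 206, 58, 59, 196, 266, 152, 244, 245, 268, 234, 210, 211, 136, 174, 18, 120, 176, 177, 186, 126, 146, 74, 8, 9, 224, 225, 100, 101, 259, 190, 160, 134, 135, 144, 252, 164, 16, 90, 91, 240, 114, 2, 44, 182, 26, 178, 36, 168, 80, 81, 46, 54, 55,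 180, 42, 230, 108, 109, 238, 52, 94, 76]
def cert1 : List ℕ := [2, 3, 27, 230, 231, 113, 15, 220, 221, 160, 161, 244, 23, 30, 31, 215, 48, 49, 167, 223, 45, 71, 6, 89, 138, 139, 204, 205, 183, 41, 13, 202, 203, 151, 241, 93, 264, 265, 247, 60, 61, 19, 136, 137, 209, 87, 193, 233, 59, 254, 255, 39, 148, 34, 181, 85, 239, 97, 260, 261, 200, 211, 119]
def cert2 : List ℕ := [4, 177, 20, 21, 69, 78, 79, 94, 237, 83, 11, 162, 163, 37, 158, 159, 128, 129, 74, 75, 67, 266, 111, 122, 123, 253, 109, 216, 217, 57, 73, 251, 153, 103]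
def cert3 : List ℕ := [10, 11, 66, 252, 253, 80, 152, 153, 37, 266, 262, 263, 69, 177, 250]
def cert4 : List ℕ := [28, 29, 184, 185, 74, 54, 236, 110]
def cert5 : List ℕ := [102, 103, 237]
def cert70 : List ℕ := [5, 242, 243, 177, 120, 121, 194, 195, 125, 102, 21, 250, 251, 127, 262, 175, 68, 69, 158, 159, 79, 162, 163, 269, 132, 133, 235, 28, 29, 81, 229, 172, 63, 236, 237, 36, 37, 33, 253, 207, 219, 82, 83, 101, 145, 75, 106, 107, 55, 72, 146, 147, 155, 122, 153, 168, 169, 217, 227, 143, 135, 157, 111, 25, 130, 249, 258, 109, 94]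
def cz : List (List (Fin 135)) := [[0, 66, 131, 41], [1, 94, 54, 110], [2, 104, 8, 23], [3, 75, 31, 17], [4, 13, 7, 32], [5, 16, 71, 34], [6, 28, 59, 106], [10, 114, 116, 121], [12, 53, 91, 22], [14, 124, 130, 132], [15, 25, 83, 50], [18, 49, 79, 78], [19, 85, 82, 99], [21, 98, 29, 57], [24, 37, 73, 120], [26, 119, 42, 125], [27, 38, 70, 90], [30, 100, 77, 97], [33, 62, 101, 93], [35, 43, 96, 39], [36, 133, 112, 64], [40, 87, 68, 126], [44, 74, 105, 84], [45, 92, 103, 51], [46, 81, 52, 123], [47, 117, 134, 107], [61, 122, 89, 65], [63, 102, 128, 86], [69, 113, 76, 118], [95, 129, 115, 111], [9, 60], [11, 56], [20, 108], [48, 109], [58, 88], [67, 72]]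

theorem rep_x : RepP x (Ap tX) := by unfold RepP; decide +kernel
theorem rep_y : RepP y (Ap tY) := by unfold RepP; decide +kernel

theorem rep_a1 : RepP a1 (Ap tA1) := (RepP.word rep_x rep_y _).congr (by decide +kernel)
theorem rep_b1 : RepP b1 (Ap tB1) := (RepP.word rep_x rep_y _).congr (by decide +kernel)
theorem rep_a2 : RepP a2 (Ap tA2) := (RepP.word rep_a1 rep_b1 _).congr (by decide +kernel)
theorem rep_b2 : RepP b2 (Ap tB2) := (RepP.word rep_a1 rep_b1 _).congr (by decide +kernel)
theorem rep_a3 : RepP a3 (Ap tA3) := (RepP.word rep_a2 rep_b2 _).congr (by decide +kernel)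
theorem rep_b3 : RepP b3 (Ap tB3) := (RepP.word rep_a2 rep_b2 _).congr (by decide +kernel)
theorem rep_a4 : RepP a4 (Ap tA4) := (RepP.word rep_a3 rep_b3 _).congr (by decide +kernel)
theorem rep_b4 : RepP b4 (Ap tB4) := (RepP.word rep_a3 rep_b3 _).congr (by decide +kernel)
theorem rep_a5 : RepP a5 (Ap tA5) := (RepP.word rep_a4 rep_b4 _).congr (by decide +kernel)
theorem rep_b5 : RepP b5 (Ap tB5) := (RepP.word rep_a4 rep_b4 _).congr (by decide +kernel)
theorem rep_eD : RepP eD (Ap tD) := RepP.congr ((((((RepP.word rep_x rep_y _).mul (RepP.word rep_a1 rep_b1 _)).mul (RepP.word rep_a2 rep_b2 _)).mul (RepP.word rep_a3 rep_b3 _)).mul (RepP.word rep_a4 rep_b4 _)).mul (RepP.word rep_a5 rep_b5 _)) (by decide +kernel)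
theorem rep_eH : RepP eH (Ap tH) := RepP.congr ((((((RepP.word rep_x rep_y _).mul (RepP.word rep_a1 rep_b1 _)).mul (RepP.word rep_a2 rep_b2 _)).mul (RepP.word rep_a3 rep_b3 _)).mul (RepP.word rep_a4 rep_b4 _)).mul (RepP.word rep_a5 rep_b5 _)) (by decide +kernel)
theorem rep_eJ : RepP eJ (Ap tJ) := RepP.congr ((((((RepP.word rep_x rep_y _).mul (RepP.word rep_a1 rep_b1 _)).mul (RepP.word rep_a2 rep_b2 _)).mul (RepP.word rep_a3 rep_b3 _)).mul (RepP.word rep_a4 rep_b4 _)).mul (RepP.word rep_a5 rep_b5 _)) (by decide +kernel)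

/-! ### The group and its invariants -/

/-- The group generated by `x` and `y`. -/
abbrev GG : Subgroup (Equiv.Perm (Fin 135)) := Subgroup.closure {x, y}

theorem x_mem : x ∈ GG := Subgroup.subset_closure (by simp)
theorem y_mem : y ∈ GG := Subgroup.subset_closure (by simp)

/-- Induction principle: in a finite group inverses are powers. -/
theorem gen_induction {P : Equiv.Perm (Fin 135) → Prop} {u v : Equiv.Perm (Fin 135)}
    (h1 : P 1) (hx : P u) (hy : P v)
    (hm : ∀ g h, P g → P h → P (g * h)) : ∀ g ∈ Subgroup.closure {u, v}, P g := by
  intro g hg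
  induction hg using Subgroup.closure_induction with
  | mem g hg =>
    rcases hg with rfl | hg
    · exact hx
    · rw [Set.mem_singleton_iff] at hg; rw [hg]; exact hy
  | one => exact h1
  | mul g h _ _ ihg ihh => exact hm g h ihg ihh
  | inv g _ ih =>
    have hp : ∀ k : ℕ, P (g ^ k) := by
      intro k
      induction k with
      | zero => simpa using h1
      | succ k ihk => rw [pow_succ]; exact hm _ _ ihk ih
    have h2 := inv_eq_of_mul_eq_one_left (a := g ^ (orderOf g - 1)) (b := g) (by
      rw [← pow_succ, Nat.sub_add_cancel (orderOf_pos g), pow_orderOf_eq_one])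
    rw [h2]; exact hp _

/-- Non-orthogonality of the points `i` and `j`. -/
def nb (i j : ℕ) : Bool := bitB tNB (Nat.add (Nat.mul 136 i) j)

/-- Incidence of the point `i` with the maximal singular subspace `u`. -/
def inc (i u : ℕ) : Bool := bitB tINC (Nat.add (Nat.mul 136 u) i)

def eqB (a b : Bool) : Bool := cond a b (not b)

theorem eqB_spec {a b : Bool} (h : eqB a b = true) : a = b := by
  cases a <;> cases b <;> simp_all [eqB]

def nbCheck (T : ℕ) : Bool :=
  allB 135 fun i => allB 135 fun j => eqB (nb (Ap T i) (Ap T j)) (nb i j)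

theorem nbCheck_x : nbCheck tX = true := by decide +kernel
theorem nbCheck_y : nbCheck tY = true := by decide +kernel

theorem nb_pres_of {g : Equiv.Perm (Fin 135)} {T : ℕ} (hg : RepP g (Ap T))
    (h : nbCheck T = true) (i j : Fin 135) : nb (g i) (g j) = nb i j := by
  rw [hg i, hg j]
  exact eqB_spec (allB_spec (allB_spec h i i.isLt) j j.isLt)

theorem nb_pres : ∀ g ∈ GG, ∀ i j : Fin 135, nb (g i) (g j) = nb i j := by
  apply gen_induction
  · intro i j; rfl
  · exact nb_pres_of rep_x nbCheck_x
  · exact nb_pres_of rep_y nbCheck_y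
  · intro g h hg hh i j
    show nb (g (h i)) (g (h j)) = _
    rw [hg, hh]

def incCheck (T F : ℕ) : Bool :=
  allB 135 fun u => cond (Nat.ble 135 (Ap F u)) false
    (allB 135 fun i => eqB (inc (Ap T i) (Ap F u)) (inc i u))

theorem incCheck_x : incCheck tX tXF = true := by decide +kernel
theorem incCheck_y : incCheck tY tYF = true := by decide +kernel

theorem inc_pres_of {g : Equiv.Perm (Fin 135)} {T F : ℕ} (hg : RepP g (Ap T))
    (h : incCheck T F = true) : ∀ u < 135, ∃ v < 135, ∀ i : Fin 135, inc (g i) v = inc i u := by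
  intro u hu
  have h1 := allB_spec h u hu
  refine ⟨Ap F u, ?_, ?_⟩
  · cases hb : Nat.ble 135 (Ap F u) with
    | true => simp [hb] at h1
    | false =>
      by_contra hc
      rw [Nat.ble_eq_true_of_le (by omega)] at hb
      exact absurd hb (by simp)
  · cases hb : Nat.ble 135 (Ap F u) with
    | true => simp [hb] at h1
    | false =>
      rw [hb, cond_false] at h1
      intro i
      rw [hg i]
      exact eqB_spec (allB_spec h1 i i.isLt)

theorem inc_pres : ∀ g ∈ GG, ∀ u < 135, ∃ v < 135, ∀ i : Fin 135, inc (g i) v = inc i u := by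
  apply gen_induction
  · intro u hu; exact ⟨u, hu, fun _ => rfl⟩
  · exact inc_pres_of rep_x incCheck_x
  · exact inc_pres_of rep_y incCheck_y
  · intro g h hg hh u hu
    obtain ⟨v, hv, h1⟩ := hh u hu
    obtain ⟨w, hw, h2⟩ := hg v hv
    exact ⟨w, hw, fun i => (h2 (h i)).trans (h1 i)⟩

/-! ### The order of the group -/

/-- Elements of the group fixing all points of a list. -/
def Fx (L : List (Fin 135)) : Subgroup (Equiv.Perm (Fin 135)) where
  carrier := {g | g ∈ GG ∧ ∀ b ∈ L, g b = b}
  one_mem' := ⟨GG.one_mem, fun _ _ => rfl⟩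
  mul_mem' := by
    rintro g h ⟨h1, h2⟩ ⟨h3, h4⟩
    refine ⟨GG.mul_mem h1 h3, fun b hb => ?_⟩
    show g (h b) = b
    rw [h4 b hb, h2 b hb]
  inv_mem' := by
    rintro g ⟨h1, h2⟩
    refine ⟨GG.inv_mem h1, fun b hb => ?_⟩
    rw [Equiv.Perm.inv_eq_iff_eq]; exact (h2 b hb).symm

theorem mem_Fx {L : List (Fin 135)} {g : Equiv.Perm (Fin 135)} :
    g ∈ Fx L ↔ g ∈ GG ∧ ∀ b ∈ L, g b = b := Iff.rfl

theorem card_level (K K' : Subgroup (Equiv.Perm (Fin 135))) (b : Fin 135)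
    (hK : ∀ g, g ∈ K' ↔ g ∈ K ∧ g b = b) (D : Finset (Fin 135))
    (h1 : ∀ g ∈ K, g b ∈ D) (h2 : ∀ t ∈ D, ∃ g ∈ K, g b = t) :
    Nat.card K = D.card * Nat.card K' := by
  have e1 : MulAction.orbit K b = (D : Set (Fin 135)) := by
    ext t
    constructor
    · rintro ⟨g, rfl⟩; exact h1 g.1 g.2
    · intro ht
      obtain ⟨g, hg, e⟩ := h2 t ht
      exact ⟨⟨g, hg⟩, e⟩
  have e2 : Nat.card (MulAction.stabilizer K b) = Nat.card K' := by
    refine Nat.card_congr ⟨fun g => ⟨g.1.1, (hK _).2 ⟨g.1.2, g.2⟩⟩,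
      fun g => ⟨⟨g.1, ((hK _).1 g.2).1⟩, ((hK _).1 g.2).2⟩, fun _ => rfl, fun _ => rfl⟩
  have e3 := MulAction.index_stabilizer K b
  have e4 := Subgroup.index_mul_card (MulAction.stabilizer K b)
  rw [e3, e1, e2, Set.ncard_coe_finset] at e4
  exact e4.symm

/-- Following a certificate for an orbit; the result is a bit mask. -/
def reach (A B : ℕ) : List ℕ → ℕ → ℕ
  | [], m => m
  | c :: l, m => reach A B l
      (cond (bitB m (Nat.div c 2))
        (Nat.lor m (Nat.shiftLeft 1 (Ap (cond (Nat.beq (Nat.mod c 2) 0) A B) (Nat.div c 2)))) m)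

theorem bitB_eq (m k : ℕ) : bitB m k = m.testBit k := by
  have h : bitB m k = Nat.beq ((m >>> k) % 2) 1 := rfl
  rw [h, Nat.testBit, Nat.and_comm, Nat.and_one_is_mod]
  rcases Nat.mod_two_eq_zero_or_one (m >>> k) with h | h <;> rw [h] <;> rfl

theorem reach_spec (K : Subgroup (Equiv.Perm (Fin 135))) (a b : Equiv.Perm (Fin 135))
    {A B : ℕ} (ha : RepP a (Ap A)) (hb : RepP b (Ap B)) (haK : a ∈ K) (hbK : b ∈ K)
    (p : Fin 135) (l : List ℕ) : ∀ m,
    (∀ k, bitB m k = true → ∃ g ∈ K, (g p).val = k) →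
    ∀ k, bitB (reach A B l m) k = true → ∃ g ∈ K, (g p).val = k := by
  induction l with
  | nil => intro m h; exact h
  | cons c l ih =>
    intro m h
    apply ih
    intro k hk
    cases hm : bitB m (Nat.div c 2) with
    | false => rw [hm] at hk; exact h k hk
    | true =>
      rw [hm] at hk
      obtain ⟨g, hg, e⟩ := h _ hm
      simp only [cond_true] at hk
      rw [bitB_eq] at hk
      have hk' : (m ||| 1 <<< (Ap (cond (Nat.beq (Nat.mod c 2) 0) A B) (Nat.div c 2))).testBit k
        = true := hk
      rw [Nat.testBit_or, Bool.or_eq_true] at hk'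
      rcases hk' with hk' | hk'
      · exact h k (by rw [bitB_eq]; exact hk')
      · rw [Nat.one_shiftLeft, Nat.testBit_two_pow, decide_eq_true_eq] at hk'
        cases hc : Nat.beq (Nat.mod c 2) 0 with
        | true =>
          rw [hc] at hk'
          refine ⟨a * g, K.mul_mem haK hg, ?_⟩
          show (a (g p)).val = k
          rw [ha, e]; exact hk'
        | false =>
          rw [hc] at hk'
          refine ⟨b * g, K.mul_mem hbK hg, ?_⟩
          show (b (g p)).val = k
          rw [hb, e]; exact hk'

/-- The points with prescribed relations to a list of points. -/
def relB : List (Fin 135 × Bool) → ℕ → Bool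
  | [], _ => true
  | c :: l, j => cond (eqB (nb j c.1.val) c.2) (relB l j) false

theorem relB_iff (l : List (Fin 135 × Bool)) (j : ℕ) :
    relB l j = true ↔ ∀ c ∈ l, nb j c.1.val = c.2 := by
  induction l with
  | nil => simp [relB]
  | cons c l ih =>
    rw [List.forall_mem_cons, ← ih, relB]
    cases nb j c.1.val <;> cases c.2 <;> simp [eqB]

theorem orbit_reach (K : Subgroup (Equiv.Perm (Fin 135))) (a b : Equiv.Perm (Fin 135))
    {A B : ℕ} (ha : RepP a (Ap A)) (hb : RepP b (Ap B)) (haK : a ∈ K) (hbK : b ∈ K)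
    (p : Fin 135) (l : List ℕ) (f : ℕ → Bool)
    (h : allB 135 (fun i => impB (f i)
      (bitB (reach A B l (Nat.shiftLeft 1 p.val)) i)) = true) (t : Fin 135) (ht : f t = true) :
    ∃ g ∈ K, g p = t := by
  have h1 := impB_spec (allB_spec h t t.isLt) ht
  obtain ⟨g, hg, e⟩ := reach_spec K a b ha hb haK hbK p l _ (by
    intro k hk
    rw [bitB_eq] at hk
    have hk' : (1 <<< p.val).testBit k = true := hk
    rw [Nat.one_shiftLeft, Nat.testBit_two_pow, decide_eq_true_eq] at hk'
    exact ⟨1, K.one_mem, hk'⟩) _ h1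
  exact ⟨g, hg, Fin.ext e⟩

theorem card_step (L : List (Fin 135)) (R : List (Fin 135 × Bool)) (p : Fin 135) (n : ℕ)
    (a b : Equiv.Perm (Fin 135)) {A B : ℕ} (ha : RepP a (Ap A)) (hb : RepP b (Ap B))
    (haK : a ∈ Fx L) (hbK : b ∈ Fx L) (l : List ℕ)
    (hR : ∀ c ∈ R, c.1 ∈ L ∧ nb p c.1 = c.2)
    (h : allB 135 (fun i => impB (relB R i)
      (bitB (reach A B l (Nat.shiftLeft 1 p.val)) i)) = true)
    (hn : (Finset.univ.filter (fun j : Fin 135 => relB R j.val = true)).card = n) :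
    Nat.card (Fx L) = n * Nat.card (Fx (p :: L)) := by
  rw [← hn]
  apply card_level _ _ p
  · intro g
    simp only [mem_Fx, List.forall_mem_cons]
    tauto
  · intro g hg
    rw [Finset.mem_filter]
    refine ⟨Finset.mem_univ _, (relB_iff _ _).2 fun c hc => ?_⟩
    obtain ⟨h1, h2⟩ := hR c hc
    have h3 := nb_pres g hg.1 p c.1
    rw [hg.2 _ h1] at h3
    rw [h3, h2]
  · intro t ht
    exact orbit_reach _ a b ha hb haK hbK p l _ h t (Finset.mem_filter.1 ht).2

theorem fx0 {g : Equiv.Perm (Fin 135)} (h : g ∈ GG) : g ∈ Fx [] := ⟨h, by simp⟩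

theorem fx_of {g a b : Equiv.Perm (Fin 135)} {L : List (Fin 135)} (p : Fin 135) {T : ℕ}
    {w : List Bool} (e : g = wd a b w) (ha : a ∈ Fx L) (hb : b ∈ Fx L)
    (hg : RepP g (Ap T)) (hp : Nat.beq (Ap T p) p = true) : g ∈ Fx (p :: L) := by
  have h : g ∈ Fx L := by rw [e]; exact wd_mem ha hb w
  refine ⟨h.1, List.forall_mem_cons.2 ⟨?_, h.2⟩⟩
  apply Fin.ext
  rw [hg p]; exact beq_spec hp

theorem a1_mem : a1 ∈ Fx [0] := fx_of 0 rfl (fx0 x_mem) (fx0 y_mem) rep_a1 (by decide +kernel)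
theorem b1_mem : b1 ∈ Fx [0] := fx_of 0 rfl (fx0 x_mem) (fx0 y_mem) rep_b1 (by decide +kernel)
theorem a2_mem : a2 ∈ Fx [1, 0] := fx_of 1 rfl a1_mem b1_mem rep_a2 (by decide +kernel)
theorem b2_mem : b2 ∈ Fx [1, 0] := fx_of 1 rfl a1_mem b1_mem rep_b2 (by decide +kernel)
theorem a3_mem : a3 ∈ Fx [2, 1, 0] := fx_of 2 rfl a2_mem b2_mem rep_a3 (by decide +kernel)
theorem b3_mem : b3 ∈ Fx [2, 1, 0] := fx_of 2 rfl a2_mem b2_mem rep_b3 (by decide +kernel)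
theorem a4_mem : a4 ∈ Fx [5, 2, 1, 0] := fx_of 5 rfl a3_mem b3_mem rep_a4 (by decide +kernel)
theorem b4_mem : b4 ∈ Fx [5, 2, 1, 0] := fx_of 5 rfl a3_mem b3_mem rep_b4 (by decide +kernel)
theorem a5_mem : a5 ∈ Fx [14, 5, 2, 1, 0] :=
  fx_of 14 rfl a4_mem b4_mem rep_a5 (by decide +kernel)
theorem b5_mem : b5 ∈ Fx [14, 5, 2, 1, 0] :=
  fx_of 14 rfl a4_mem b4_mem rep_b5 (by decide +kernel)

theorem card0 : Nat.card (Fx []) = 135 * Nat.card (Fx [0]) :=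
  card_step [] [] 0 135 x y rep_x rep_y (fx0 x_mem) (fx0 y_mem) cert0 (by decide +kernel)
    (by decide +kernel) (by decide +kernel)
theorem card1 : Nat.card (Fx [0]) = 64 * Nat.card (Fx [1, 0]) :=
  card_step [0] [(0, true)] 1 64 a1 b1 rep_a1 rep_b1 a1_mem b1_mem cert1 (by decide +kernel)
    (by decide +kernel) (by decide +kernel)
theorem card2 : Nat.card (Fx [1, 0]) = 35 * Nat.card (Fx [2, 1, 0]) :=
  card_step [1, 0] [(0, false), (1, false)] 2 35 a2 b2 rep_a2 rep_b2 a2_mem b2_mem cert2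
    (by decide +kernel) (by decide +kernel) (by decide +kernel)
theorem card3 : Nat.card (Fx [2, 1, 0]) = 16 * Nat.card (Fx [5, 2, 1, 0]) :=
  card_step [2, 1, 0] [(0, false), (1, false), (2, true)] 5 16 a3 b3 rep_a3 rep_b3 a3_mem b3_mem
    cert3 (by decide +kernel) (by decide +kernel) (by decide +kernel)
theorem card4 : Nat.card (Fx [5, 2, 1, 0]) = 9 * Nat.card (Fx [14, 5, 2, 1, 0]) :=
  card_step [5, 2, 1, 0] [(0, false), (1, false), (2, false), (5, false)] 14 9 a4 b4 rep_a4 rep_b4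
    a4_mem b4_mem cert4 (by decide +kernel) (by decide +kernel) (by decide +kernel)
theorem card5 : Nat.card (Fx [14, 5, 2, 1, 0]) = 4 * Nat.card (Fx [51, 14, 5, 2, 1, 0]) :=
  card_step [14, 5, 2, 1, 0] [(0, false), (1, false), (2, false), (5, false), (14, true)] 51 4
    a5 b5 rep_a5 rep_b5 a5_mem b5_mem cert5
    (by decide +kernel) (by decide +kernel) (by decide +kernel)

def six : List (Fin 135 × Bool) :=
  [(0, false), (1, false), (2, false), (5, false), (14, false), (51, false)]

theorem fam_unique : allB 135 (fun u => impB (cond (inc 0 u) (cond (inc 2 u) (inc 14 u) false) false)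
    (Nat.beq u 0)) = true := by decide +kernel
theorem e4_unique : allB 135 (fun j => impB (cond (inc j 0) (relB six j) false)
    (Nat.beq j 27)) = true := by decide +kernel
theorem f4_unique : allB 135 (fun j => impB (cond (nb j 27) (relB six j) false)
    (Nat.beq j 55)) = true := by decide +kernel

def coord (i j b : ℕ) : Bool := eqB (nb i b) (nb j b)

theorem all_unique : allB 135 (fun i => allB 135 (fun j => impB
    (cond (coord i j 0) (cond (coord i j 1) (cond (coord i j 2) (cond (coord i j 5)
    (cond (coord i j 14) (cond (coord i j 51) (cond (coord i j 27) (coord i j 55)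
     false) false) false) false) false) false) false)
    (Nat.beq i j))) = true := by decide +kernel

theorem coord_of {i j b : ℕ} (h : nb i b = nb j b) : coord i j b = true := by
  unfold coord; rw [h]; cases nb j b <;> rfl

theorem fx_bot : Fx [51, 14, 5, 2, 1, 0] = ⊥ := by
  rw [eq_bot_iff]
  rintro g ⟨hg, hL⟩
  rw [Subgroup.mem_bot]
  have h0 : g 0 = 0 := hL 0 (by simp)
  have h1 : g 1 = 1 := hL 1 (by simp)
  have h2 : g 2 = 2 := hL 2 (by simp)
  have h5 : g 5 = 5 := hL 5 (by simp)
  have h14 : g 14 = 14 := hL 14 (by simp)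
  have h51 : g 51 = 51 := hL 51 (by simp)
  have hnb := nb_pres g hg
  have key : ∀ i b : Fin 135, g b = b → nb (g i) b = nb i b := by
    intro i b hb
    have := hnb i b
    rwa [hb] at this
  have hsix : ∀ i : Fin 135, relB six i = true → relB six (g i) = true := by
    intro i hi
    rw [relB_iff] at hi ⊢
    intro c hc
    rw [← hi c hc]
    apply key
    simp only [six, List.mem_cons, List.not_mem_nil, or_false] at hc
    rcases hc with rfl | rfl | rfl | rfl | rfl | rfl <;> assumption
  obtain ⟨v, hv, hi⟩ := inc_pres g hg 0 (by norm_num)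
  have hv0 : v = 0 := by
    apply beq_spec
    refine impB_spec (allB_spec fam_unique v hv) ?_
    have i0 := hi 0
    have i2 := hi 2
    have i14 := hi 14
    rw [h0] at i0
    rw [h2] at i2
    rw [h14] at i14
    have j0 : inc 0 v = true := i0.trans (by decide +kernel)
    have j2 : inc 2 v = true := i2.trans (by decide +kernel)
    have j14 : inc 14 v = true := i14.trans (by decide +kernel)
    rw [j0, j2, j14]; rfl
  subst hv0
  have h27 : g 27 = 27 := by
    apply Fin.ext
    apply beq_spec
    refine impB_spec (allB_spec e4_unique (g 27) (g 27).isLt) ?_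
    rw [hi 27, hsix 27 (by decide +kernel)]
    decide +kernel
  have h55 : g 55 = 55 := by
    apply Fin.ext
    apply beq_spec
    refine impB_spec (allB_spec f4_unique (g 55) (g 55).isLt) ?_
    have k := key 55 27 h27
    have k' : nb (g 55) 27 = true := k.trans (by decide +kernel)
    rw [k', hsix 55 (by decide +kernel)]
    decide +kernel
  apply Equiv.ext
  intro i
  apply Fin.ext
  apply beq_spec
  refine impB_spec (allB_spec (allB_spec all_unique (g i) (g i).isLt) i i.isLt) ?_
  have c0 : coord (g i) i 0 = true := coord_of (key i 0 h0)
  have c1 : coord (g i) i 1 = true := coord_of (key i 1 h1)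
  have c2 : coord (g i) i 2 = true := coord_of (key i 2 h2)
  have c5 : coord (g i) i 5 = true := coord_of (key i 5 h5)
  have c14 : coord (g i) i 14 = true := coord_of (key i 14 h14)
  have c51 : coord (g i) i 51 = true := coord_of (key i 51 h51)
  have c27 : coord (g i) i 27 = true := coord_of (key i 27 h27)
  have c55 : coord (g i) i 55 = true := coord_of (key i 55 h55)
  rw [c0, c1, c2, c5, c14, c51, c27, c55]; rfl

theorem card_GG : Nat.card GG = 174182400 := by
  have e : Fx [] = GG := by
    ext g
    rw [mem_Fx]; simp
  rw [← e, card0, card1, card2, card3, card4, card5, fx_bot, Subgroup.card_bot]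

/-! ### Explicit elements and relations -/

theorem eD_mem : eD ∈ GG :=
  GG.mul_mem (GG.mul_mem (GG.mul_mem (GG.mul_mem (GG.mul_mem
    (wd_mem x_mem y_mem _) (wd_mem a1_mem.1 b1_mem.1 _)) (wd_mem a2_mem.1 b2_mem.1 _))
    (wd_mem a3_mem.1 b3_mem.1 _)) (wd_mem a4_mem.1 b4_mem.1 _)) (wd_mem a5_mem.1 b5_mem.1 _)
theorem eH_mem : eH ∈ GG :=
  GG.mul_mem (GG.mul_mem (GG.mul_mem (GG.mul_mem (GG.mul_mem
    (wd_mem x_mem y_mem _) (wd_mem a1_mem.1 b1_mem.1 _)) (wd_mem a2_mem.1 b2_mem.1 _))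
    (wd_mem a3_mem.1 b3_mem.1 _)) (wd_mem a4_mem.1 b4_mem.1 _)) (wd_mem a5_mem.1 b5_mem.1 _)
theorem eJ_mem : eJ ∈ GG :=
  GG.mul_mem (GG.mul_mem (GG.mul_mem (GG.mul_mem (GG.mul_mem
    (wd_mem x_mem y_mem _) (wd_mem a1_mem.1 b1_mem.1 _)) (wd_mem a2_mem.1 b2_mem.1 _))
    (wd_mem a3_mem.1 b3_mem.1 _)) (wd_mem a4_mem.1 b4_mem.1 _)) (wd_mem a5_mem.1 b5_mem.1 _)

theorem x_pow : x ^ 9 = 1 := (rep_x.pow 9).ext RepP.one (by decide +kernel)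
theorem y_pow : y ^ 2 = 1 := (rep_y.pow 2).ext RepP.one (by decide +kernel)
theorem xy_pow : (x * y) ^ 4 = 1 := ((rep_x.mul rep_y).pow 4).ext RepP.one (by decide +kernel)
theorem odd_pow : ((x * y) * (x ^ 2 * y) * (x ^ 4 * y)) ^ 9 = 1 :=
  ((((rep_x.mul rep_y).mul ((rep_x.pow 2).mul rep_y)).mul ((rep_x.pow 4).mul rep_y)).pow 9).ext
    RepP.one (by decide +kernel)
theorem eD_comm : eD * x = x * eD := (rep_eD.mul rep_x).ext (rep_x.mul rep_eD) (by decide +kernel)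
theorem eH_conj : eH * x = x ^ 2 * eH :=
  (rep_eH.mul rep_x).ext ((rep_x.pow 2).mul rep_eH) (by decide +kernel)
theorem eJ_conj : (x * y) * eJ * (x * y) = eJ :=
  (((rep_x.mul rep_y).mul rep_eJ).mul (rep_x.mul rep_y)).ext rep_eJ (by decide +kernel)
theorem xy_ne : x * y ≠ y * x := by
  intro h
  have h1 : allB 135 (fun i => Nat.beq (Ap tX (Ap tY i)) (Ap tY (Ap tX i))) = true := by
    have e1 := rep_x.mul rep_y
    have e2 := rep_y.mul rep_x
    rw [h] at e1
    have h2 : ∀ n, n ≤ 135 →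
        allB n (fun i => Nat.beq (Ap tX (Ap tY i)) (Ap tY (Ap tX i))) = true := by
      intro n
      induction n with
      | zero => intro _; rfl
      | succ k ih =>
        intro hk
        have e3 : Ap tX (Ap tY k) = Ap tY (Ap tX k) :=
          (e1 ⟨k, by omega⟩).symm.trans (e2 ⟨k, by omega⟩)
        show cond (Nat.beq (Ap tX (Ap tY k)) (Ap tY (Ap tX k))) _ false = true
        rw [e3, Nat.beq_refl]
        exact ih (by omega)
    exact h2 135 le_rfl
  exact absurd h1 (by decide +kernel)

/-! ### Cycle types -/

theorem cycleType_permOfCycles (cs : List (List (Fin 135))) (h1 : cs.flatten.Nodup)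
    (h2 : ∀ l ∈ cs, 2 ≤ l.length) :
    (permOfCycles cs).cycleType = (cs.map List.length : Multiset ℕ) := by
  rw [List.nodup_flatten] at h1
  obtain ⟨h3, h4⟩ := h1
  show ((cs.map List.formPerm).prod).cycleType = _
  rw [Equiv.Perm.cycleType_eq (cs.map List.formPerm) rfl]
  · rw [List.map_map]
    congr 1
    apply List.map_congr_left
    intro l hl
    show (List.formPerm l).support.card = _
    rw [List.support_formPerm_of_nodup l (h3 l hl), List.toFinset_card_of_nodup (h3 l hl)]
    rintro v rfl
    exact absurd (h2 _ hl) (by simp)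
  · intro g hg
    obtain ⟨l, hl, rfl⟩ := List.mem_map.1 hg
    exact List.isCycle_formPerm (h3 l hl) (h2 l hl)
  · rw [List.pairwise_map]
    refine h4.imp_of_mem ?_
    intro l l' hl hl' h
    exact (List.formPerm_disjoint_iff (h3 l hl) (h3 l' hl') (h2 l hl) (h2 l' hl')).2 h

theorem cycleType_x : x.cycleType = Multiset.replicate 15 9 := by
  unfold x
  rw [cycleType_permOfCycles _ (by decide +kernel) (by decide +kernel)]
  rfl
theorem cycleType_y : y.cycleType = Multiset.replicate 52 2 := by
  unfold y
  rw [cycleType_permOfCycles _ (by decide +kernel) (by decide +kernel)]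
  rfl
theorem xy_eq : x * y = permOfCycles cz := by
  apply Equiv.ext
  intro i
  apply Fin.ext
  rw [(rep_x.mul rep_y) i]
  revert i
  decide +kernel
theorem cycleType_z : ((x * y)⁻¹).cycleType = Multiset.replicate 30 4 + Multiset.replicate 6 2 := by
  rw [Equiv.Perm.cycleType_inv, xy_eq,
    cycleType_permOfCycles _ (by decide +kernel) (by decide +kernel)]
  rfl

theorem order_x : orderOf x = 9 := by
  rw [← Equiv.Perm.lcm_cycleType, cycleType_x]; decide
theorem order_y : orderOf y = 2 := by
  rw [← Equiv.Perm.lcm_cycleType, cycleType_y]; decide +kernel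
theorem order_z : orderOf (x * y)⁻¹ = 4 := by
  rw [← Equiv.Perm.lcm_cycleType, cycleType_z]; decide +kernel

/-! ### Rational classes -/

theorem eH_pow (j : ℕ) : eH ^ j * x * (eH ^ j)⁻¹ = x ^ (2 ^ j) := by
  have h0 : eH * x * eH⁻¹ = x ^ 2 := by rw [eH_conj]; group
  induction j with
  | zero => simp
  | succ j ih =>
    have : eH ^ (j + 1) * x * (eH ^ (j + 1))⁻¹ = eH * (eH ^ j * x * (eH ^ j)⁻¹) * eH⁻¹ := by
      rw [pow_succ' eH]; group
    rw [this, ih, ← conj_pow, h0, ← pow_mul, ← pow_succ']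

theorem zpow_mod {g : Equiv.Perm (Fin 135)} {m : ℕ} (h : g ^ m = 1) (k : ℤ) :
    g ^ k = g ^ (k % m) := by
  conv_lhs => rw [← Int.emod_add_mul_ediv k m, zpow_add, zpow_mul, zpow_natCast, h, one_zpow, mul_one]

theorem rat_x (k : ℤ) (hk : Int.gcd k 9 = 1) : ∃ h ∈ GG, h * x * h⁻¹ = x ^ k := by
  have hm : ∀ j : ℕ, (2 ^ j : ℕ) % 9 = (k % 9).toNat → ∃ h ∈ GG, h * x * h⁻¹ = x ^ k := by
    intro j hj
    refine ⟨eH ^ j, GG.pow_mem eH_mem j, ?_⟩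
    rw [eH_pow, zpow_mod x_pow k, pow_eq_pow_mod _ x_pow, hj]
    rw [← zpow_natCast, Int.toNat_of_nonneg (by omega)]
    rfl
  have h3 : k % 3 ≠ 0 := by
    intro h
    have h1 : (3 : ℤ) ∣ (Int.gcd k 9 : ℤ) :=
      Int.dvd_coe_gcd (Int.dvd_of_emod_eq_zero h) (by norm_num)
    rw [hk] at h1; revert h1; decide
  have : k % 9 = 1 ∨ k % 9 = 2 ∨ k % 9 = 4 ∨ k % 9 = 5 ∨ k % 9 = 7 ∨ k % 9 = 8 := by omega
  rcases this with h | h | h | h | h | h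
  · exact hm 0 (by rw [h]; rfl)
  · exact hm 1 (by rw [h]; rfl)
  · exact hm 2 (by rw [h]; rfl)
  · exact hm 5 (by rw [h]; rfl)
  · exact hm 4 (by rw [h]; rfl)
  · exact hm 3 (by rw [h]; rfl)

theorem odd_of {k : ℤ} {m : ℕ} (hm : 2 ∣ m) (hk : Int.gcd k m = 1) : k % 2 = 1 := by
  by_contra h
  have h1 : (2 : ℤ) ∣ (Int.gcd k m : ℤ) :=
    Int.dvd_coe_gcd (Int.dvd_of_emod_eq_zero (by omega)) (by exact_mod_cast hm)
  rw [hk] at h1; revert h1; decide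

theorem rat_y (k : ℤ) (hk : Int.gcd k (2 : ℕ) = 1) : ∃ h ∈ GG, h * y * h⁻¹ = y ^ k := by
  refine ⟨1, GG.one_mem, ?_⟩
  rw [zpow_mod y_pow k]
  have h2 : k % (2 : ℕ) = 1 := odd_of (by norm_num) hk
  rw [h2]; simp

theorem rat_z (k : ℤ) (hk : Int.gcd k (4 : ℕ) = 1) :
    ∃ h ∈ GG, h * (x * y)⁻¹ * h⁻¹ = ((x * y)⁻¹) ^ k := by
  have hz : ((x * y)⁻¹) ^ 4 = 1 := by rw [inv_pow, xy_pow, inv_one]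
  have h2 : k % 2 = 1 := odd_of (by norm_num) hk
  have h4 : k % (4 : ℕ) = 1 ∨ k % (4 : ℕ) = 3 := by push_cast; omega
  rw [zpow_mod hz k]
  rcases h4 with h | h
  · exact ⟨1, GG.one_mem, by rw [h]; simp⟩
  · refine ⟨eJ, eJ_mem, ?_⟩
    rw [h]
    have e1 : ((x * y)⁻¹) ^ (3 : ℤ) = x * y := by
      have : ∀ w : Equiv.Perm (Fin 135), (w⁻¹) ^ (3 : ℤ) = (w ^ 4)⁻¹ * w := by
        intro w; group
      rw [this, xy_pow]; simp
    rw [e1, mul_inv_eq_iff_eq_mul, mul_inv_eq_iff_eq_mul]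
    exact eJ_conj.symm

/-! ### Primitivity -/

theorem trans0 (t : Fin 135) : ∃ g ∈ GG, g 0 = t :=
  orbit_reach GG x y rep_x rep_y x_mem y_mem 0 cert0 (fun _ => true) (by decide +kernel) t rfl

theorem trans2 (s t : Fin 135) : ∃ g ∈ GG, g s = t := by
  obtain ⟨g, hg, rfl⟩ := trans0 s
  obtain ⟨h, hh, rfl⟩ := trans0 t
  exact ⟨h * g⁻¹, GG.mul_mem hh (GG.inv_mem hg), by simp⟩

theorem pretrans : MulAction.IsPretransitive GG (Fin 135) := by
  constructor
  intro s t
  obtain ⟨g, hg, h⟩ := trans2 s t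
  exact ⟨⟨g, hg⟩, h⟩

theorem stab_trans (s t : Fin 135) (hs : s ≠ 0) (ht : t ≠ 0) (h : nb s 0 = nb t 0) :
    ∃ g ∈ Fx [0], g s = t := by
  have key : ∃ r : Fin 135, ∀ t : Fin 135, t ≠ 0 → nb t 0 = nb s 0 → ∃ g ∈ Fx [0], g r = t := by
    cases hb : nb s 0 with
    | true =>
      refine ⟨1, fun t _ h1 => ?_⟩
      exact orbit_reach _ a1 b1 rep_a1 rep_b1 a1_mem b1_mem 1 cert1 (fun t => nb t 0)
        (by decide +kernel) t h1
    | false =>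
      refine ⟨2, fun t h0 h1 => ?_⟩
      refine orbit_reach _ a1 b1 rep_a1 rep_b1 a1_mem b1_mem 2 cert70
        (fun t => cond (nb t 0) false (not (Nat.beq t 0)))
        (by decide +kernel) t ?_
      show cond (nb t 0) false (not (Nat.beq t 0)) = true
      rw [h1]
      cases hc : Nat.beq t.val 0 with
      | true => exact absurd (Fin.ext (beq_spec hc)) h0
      | false => rfl
  obtain ⟨r, hr⟩ := key
  obtain ⟨g, hg, e⟩ := hr s hs rfl
  obtain ⟨k, hk, e'⟩ := hr t ht h.symm
  refine ⟨k * g⁻¹, (Fx [0]).mul_mem hk ((Fx [0]).inv_mem hg), ?_⟩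
  rw [← e, ← e']; simp

theorem card_nbhd (c : Bool) :
    65 ≤ (Finset.univ.filter (fun t : Fin 135 => t = 0 ∨ nb t 0 = c)).card := by
  cases c <;> decide +kernel

open scoped Pointwise in
theorem block_trivial (B : Set (Fin 135)) (hB : MulAction.IsBlock GG B) :
    MulAction.IsTrivialBlock B := by
  have := pretrans
  by_cases hs : B.Subsingleton
  · exact Or.inl hs
  right
  rw [Set.not_subsingleton_iff] at hs
  obtain ⟨c, hc, d, hd, hcd⟩ := hs
  obtain ⟨g, hg⟩ := MulAction.exists_smul_eq GG c 0
  have hB' := hB.translate g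
  have h0 : (0 : Fin 135) ∈ g • B := hg ▸ Set.smul_mem_smul_set hc
  have he : g • d ∈ g • B := Set.smul_mem_smul_set hd
  have hne : g • d ≠ 0 := by
    rw [← hg]; intro h; exact hcd (MulAction.injective g h).symm
  have hsub : ((Finset.univ.filter (fun t : Fin 135 => t = 0 ∨ nb t 0 = nb (g • d : Fin 135) 0) :
      Finset (Fin 135)) : Set (Fin 135)) ⊆ g • B := by
    intro t ht
    rw [Finset.mem_coe, Finset.mem_filter] at ht
    by_cases ht0 : t = 0
    · rw [ht0]; exact h0
    have ht2 := ht.2.resolve_left ht0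
    obtain ⟨k, hk, e⟩ := stab_trans (g • d) t hne ht0 ht2.symm
    have hk0 : (⟨k, hk.1⟩ : GG) • (0 : Fin 135) = 0 := hk.2 0 (by simp)
    have e1 := hB'.smul_eq_of_mem (g := (⟨k, hk.1⟩ : GG)) h0 (by rw [hk0]; exact h0)
    rw [← e1]
    have : (⟨k, hk.1⟩ : GG) • (g • d) = t := e
    rw [← this]
    exact Set.smul_mem_smul_set he
  have hcard : 65 ≤ (g • B).ncard := by
    refine le_trans (card_nbhd (nb (g • d : Fin 135) 0)) ?_
    rw [← Set.ncard_coe_finset]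
    exact Set.ncard_le_ncard hsub (Set.toFinite _)
  have hdvd := hB'.ncard_dvd_card ⟨0, h0⟩
  rw [Nat.card_eq_fintype_card, Fintype.card_fin] at hdvd
  obtain ⟨k, hk⟩ := hdvd
  have hk3 : k < 3 := by
    by_contra h3
    have : 65 * 3 ≤ (g • B).ncard * k := Nat.mul_le_mul hcard (by omega)
    omega
  have hn : (g • B).ncard = 135 := by
    interval_cases k <;> omega
  have hu : g • B = Set.univ := by
    apply Set.eq_of_subset_of_ncard_le (Set.subset_univ _) _ (Set.toFinite _)
    rw [hn, Set.ncard_univ, Nat.card_eq_fintype_card, Fintype.card_fin]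
  rw [← inv_smul_smul g B, hu, Set.smul_set_univ]

/-! ### Simplicity -/

theorem pinv_self (k : Equiv.Perm (Fin 135)) (p : Fin 135) : k⁻¹ (k p) = p :=
  k.symm_apply_apply p
theorem pself_inv (k : Equiv.Perm (Fin 135)) (p : Fin 135) : k (k⁻¹ p) = p :=
  k.apply_symm_apply p

/-- `g` fixes `p` and all lines through `p`. -/
def CT (p : Fin 135) (g : Equiv.Perm (Fin 135)) : Prop :=
  (∀ i j : Fin 135, nb (g i) (g j) = nb i j) ∧ g p = p ∧
    ∀ v u : Fin 135, nb v p = false → nb u v = false → nb u p = false → nb u (g v) = false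

theorem CT.one (p : Fin 135) : CT p 1 := ⟨fun _ _ => rfl, rfl, fun _ _ _ h _ => h⟩

theorem CT.mul {p : Fin 135} {g h : Equiv.Perm (Fin 135)} (hg : CT p g) (hh : CT p h) :
    CT p (g * h) := by
  refine ⟨fun i j => (hg.1 (h i) (h j)).trans (hh.1 i j), ?_, ?_⟩
  · show g (h p) = p
    rw [hh.2.1, hg.2.1]
  · intro v u h1 h2 h3
    show nb u (g (h v)) = false
    refine hg.2.2 (h v) u ?_ (hh.2.2 v u h1 h2 h3) h3
    have := hh.1 v p
    rw [hh.2.1] at this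
    rw [this]; exact h1

theorem CT.inv {p : Fin 135} {g : Equiv.Perm (Fin 135)} (hg : CT p g) : CT p g⁻¹ :=
  gen_induction (P := CT p) (u := g) (v := g) (CT.one p) hg hg (fun _ _ h1 h2 => h1.mul h2) g⁻¹
    (Subgroup.inv_mem _ (Subgroup.subset_closure (by simp)))

theorem CT.conj {p : Fin 135} {g : Equiv.Perm (Fin 135)} (hg : CT p g)
    {k : Equiv.Perm (Fin 135)} (hk : k ∈ GG) : CT (k p) (k * g * k⁻¹) := by
  have e1 : ∀ i j : Fin 135, nb (k i) (k j) = nb i j := nb_pres k hk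
  have e2 : ∀ i j : Fin 135, nb (k⁻¹ i) (k⁻¹ j) = nb i j := nb_pres k⁻¹ (GG.inv_mem hk)
  refine ⟨fun i j => ?_, ?_, ?_⟩
  · show nb (k (g (k⁻¹ i))) (k (g (k⁻¹ j))) = _
    rw [e1, hg.1, e2]
  · show k (g (k⁻¹ (k p))) = k p
    rw [pinv_self, hg.2.1]
  · intro v u h1 h2 h3
    show nb u (k (g (k⁻¹ v))) = false
    have a1 : nb (k⁻¹ v) p = false := by
      have := e2 v (k p)
      rw [pinv_self] at this; rw [this]; exact h1
    have a3 : nb (k⁻¹ u) p = false := by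
      have := e2 u (k p)
      rw [pinv_self] at this; rw [this]; exact h3
    have a2 : nb (k⁻¹ u) (k⁻¹ v) = false := by rw [e2]; exact h2
    have := hg.2.2 _ _ a1 a2 a3
    rw [← e1, pself_inv] at this
    exact this

/-- The third point on the line through `0` and `v`. -/
def th (v : ℕ) : ℕ := Ap tIdx (Nat.xor (Ap tVec v) (Ap tVec 0))

def thCheck1 : Bool := allB 135 fun v => cond (nb v 0) true (cond (Nat.beq v 0) true
  (cond (Nat.ble (th v) 134) (cond (nb (th v) 0) false (cond (Nat.beq (th v) 0) false
    (Nat.beq (th (th v)) v))) false))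

def thCheck2 : Bool := allB 135 fun v => cond (nb v 0) true (cond (Nat.beq v 0) true
  (allB 135 fun w => cond (Nat.beq w 0) true (cond (Nat.beq w v) true (cond (Nat.beq w (th v)) true
    (anyB 135 fun u => cond (nb u v) false (cond (nb u 0) false (nb u w)))))))

def sepCheck : Bool := allB 135 fun a => allB 135 fun b => cond (Nat.beq a b) true
  (impB (nb a 0) (impB (nb b 0)
    (anyB 135 fun u => cond (nb u 0) false (not (eqB (nb u a) (nb u b))))))

theorem thCheck1_eq : thCheck1 = true := by decide +kernel
theorem thCheck2_eq : thCheck2 = true := by decide +kernel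
theorem sepCheck_eq : sepCheck = true := by decide +kernel

theorem nbeq_false {a b : ℕ} (h : a ≠ b) : Nat.beq a b = false := by
  cases hb : Nat.beq a b with
  | false => rfl
  | true => exact absurd (beq_spec hb) h

theorem th_exists (v : Fin 135) (h0 : nb v 0 = false) (hv : v ≠ 0) :
    ∃ t : Fin 135, t.val = th v ∧ nb t 0 = false ∧ t ≠ 0 ∧ th t.val = v := by
  have h := allB_spec thCheck1_eq v.val v.isLt
  simp only [h0, cond_false] at h
  rw [nbeq_false (b := 0) (fun e => hv (Fin.ext e)), cond_false] at h
  cases h1 : Nat.ble (th v) 134 with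
  | false => simp [h1] at h
  | true =>
    have h1' := Nat.le_of_ble_eq_true h1
    simp only [h1, cond_true] at h
    cases h2 : nb (th v) 0 with
    | true => simp [h2] at h
    | false =>
      simp only [h2, cond_false] at h
      cases h3 : Nat.beq (th v) 0 with
      | true => simp [h3] at h
      | false =>
        simp only [h3, cond_false] at h
        refine ⟨⟨th v, by omega⟩, rfl, h2, ?_, beq_spec h⟩
        intro e
        have e' : th v = 0 := congrArg Fin.val e
        rw [e'] at h3
        exact absurd h3 (by decide)

theorem CT.apply {g : Equiv.Perm (Fin 135)} (hg : CT 0 g) (v : Fin 135) (h0 : nb v 0 = false)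
    (hv : v ≠ 0) : g v = v ∨ (g v).val = th v := by
  by_contra hc
  rw [not_or] at hc
  have h := allB_spec thCheck2_eq v.val v.isLt
  simp only [h0, cond_false] at h
  rw [nbeq_false (b := 0) (fun e => hv (Fin.ext e)), cond_false] at h
  have h := allB_spec h (g v).val (g v).isLt
  rw [nbeq_false (b := 0) (fun e => hv (g.injective ((Fin.ext e : g v = 0).trans hg.2.1.symm))),
    nbeq_false (fun e => hc.1 (Fin.ext e)), nbeq_false hc.2, cond_false, cond_false, cond_false] at h
  obtain ⟨u, hu, h⟩ := anyB_spec h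
  cases h1 : nb u v with
  | true => simp [h1] at h
  | false =>
    cases h2 : nb u 0 with
    | true => simp [h1, h2] at h
    | false =>
      simp only [h1, h2, cond_false] at h
      have := hg.2.2 v ⟨u, hu⟩ h0 h1 h2
      simp only at this
      rw [this] at h
      exact absurd h (by decide)

theorem CT.comm_apply {g h : Equiv.Perm (Fin 135)} (hg : CT 0 g) (hh : CT 0 h) (v : Fin 135)
    (h0 : nb v 0 = false) : g (h v) = h (g v) := by
  by_cases hv : v = 0
  · rw [hv, hg.2.1, hh.2.1, hg.2.1]
  obtain ⟨t, e1, e2, e3, e4⟩ := th_exists v h0 hv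
  have key : ∀ k : Equiv.Perm (Fin 135), CT 0 k → (k v = v ∧ k t = t) ∨ (k v = t ∧ k t = v) := by
    intro k hk
    have i1 : k v = v ∨ k v = t := (hk.apply v h0 hv).imp id (fun e => Fin.ext (e.trans e1.symm))
    have i2 : k t = t ∨ k t = v := (hk.apply t e2 e3).imp id (fun e => Fin.ext (e.trans e4))
    rcases i1 with i1 | i1 <;> rcases i2 with i2 | i2
    · exact Or.inl ⟨i1, i2⟩
    · have e : v = t := k.injective (i1.trans i2.symm)
      exact Or.inl ⟨i1, i2.trans e⟩
    · have e : v = t := k.injective (i1.trans i2.symm)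
      exact Or.inr ⟨i1, i2.trans e.symm⟩
    · exact Or.inr ⟨i1, i2⟩
  rcases key g hg with ⟨a, b⟩ | ⟨a, b⟩ <;> rcases key h hh with ⟨c, d⟩ | ⟨c, d⟩ <;>
    simp only [a, b, c, d]

theorem CT.comm {g h : Equiv.Perm (Fin 135)} (hg : CT 0 g) (hh : CT 0 h) : g * h = h * g := by
  apply Equiv.ext
  intro w
  show g (h w) = h (g w)
  cases h0 : nb w 0 with
  | false => exact hg.comm_apply hh w h0
  | true =>
    by_contra hne
    have n1 : ∀ k : Equiv.Perm (Fin 135), CT 0 k → ∀ i : Fin 135, nb (k i) 0 = nb i 0 := by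
      intro k hk i
      have := hk.1 i 0
      rw [hk.2.1] at this
      exact this
    have h1 := allB_spec (allB_spec sepCheck_eq (g (h w)).val (g (h w)).isLt)
      (h (g w)).val (h (g w)).isLt
    rw [nbeq_false (fun e => hne (Fin.ext e)), cond_false] at h1
    have h1 := impB_spec (impB_spec h1 (by rw [n1 g hg, n1 h hh]; exact h0))
      (by rw [n1 h hh, n1 g hg]; exact h0)
    obtain ⟨u, hu, h1⟩ := anyB_spec h1
    cases h2 : nb u 0 with
    | true => simp [h2] at h1
    | false =>
      simp only [h2, cond_false] at h1
      obtain ⟨u', hu'⟩ : ∃ u' : Fin 135, g (h u') = ⟨u, hu⟩ :=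
        (g * h).surjective ⟨u, hu⟩
      have h3 : nb u' 0 = false := by
        rw [← n1 h hh, ← n1 g hg, hu']; exact h2
      have h4 : nb u (g (h w)) = nb u' w := by
        rw [← hh.1, ← hg.1, hu']
      have h5 : nb u (h (g w)) = nb u' w := by
        rw [← hg.1, ← hh.1, ← hg.comm_apply hh u' h3, hu']
      rw [h4, h5] at h1
      cases hb : nb u' w <;> simp [hb, eqB] at h1

theorem CT.comm' {p : Fin 135} {g h : Equiv.Perm (Fin 135)} (hg : CT p g) (hh : CT p h) :
    g * h = h * g := by
  obtain ⟨k, hk, e⟩ := trans2 p 0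
  have h1 := hg.conj hk
  have h2 := hh.conj hk
  rw [e] at h1 h2
  have h3 := h1.comm h2
  have e1 : k * g * k⁻¹ * (k * h * k⁻¹) = k * (g * h) * k⁻¹ := by group
  have e2 : k * h * k⁻¹ * (k * g * k⁻¹) = k * (h * g) * k⁻¹ := by group
  rw [e1, e2] at h3
  exact mul_left_cancel (mul_right_cancel h3)

def yCheck : Bool := Nat.beq (Ap tY 1) 1 &&
  allB 135 fun v => cond (nb v 1) true (allB 135 fun u => cond (nb u v) true (cond (nb u 1) true
    (not (nb u (Ap tY v)))))

theorem CT_y : CT 1 y := by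
  have hc : yCheck = true := by decide +kernel
  rw [yCheck, Bool.and_eq_true] at hc
  refine ⟨nb_pres y y_mem, ?_, ?_⟩
  · apply Fin.ext
    rw [rep_y]; exact beq_spec hc.1
  · intro v u h1 h2 h3
    have h := allB_spec hc.2 v.val v.isLt
    have h1' : nb v.val 1 = false := h1
    have h3' : nb u.val 1 = false := h3
    simp only [h1', cond_false] at h
    have h := allB_spec h u.val u.isLt
    simp only [h2, h3', cond_false] at h
    rw [rep_y v]
    simpa using h

def xG : GG := ⟨x, x_mem⟩
def yG : GG := ⟨y, y_mem⟩

theorem eq_top_of {N : Subgroup GG} (hx : xG ∈ N) (hy : yG ∈ N) : N = ⊤ := by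
  rw [eq_top_iff]
  have h : ∀ g (hg : g ∈ GG), (⟨g, hg⟩ : GG) ∈ N := by
    intro g hg
    have h1 : GG ≤ N.map GG.subtype := by
      rw [Subgroup.closure_le]
      rintro a (rfl | ha)
      · exact ⟨xG, hx, rfl⟩
      · rw [Set.mem_singleton_iff] at ha
        rw [ha]; exact ⟨yG, hy, rfl⟩
    obtain ⟨a, ha, e⟩ := h1 hg
    have : a = ⟨g, hg⟩ := Subtype.ext e
    rw [← this]; exact ha
  exact fun g _ => h g.1 g.2

theorem ne_aux {G : Type*} [Group G] {H : Subgroup G} {a b : G} (ha : a ∈ H) (hb : b ∈ H)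
    (h : a * b ≠ b * a) : (⟨a, ha⟩ : H) * ⟨b, hb⟩ ≠ ⟨b, hb⟩ * ⟨a, ha⟩ :=
  fun e => h (congrArg Subtype.val e)
theorem xyG_ne : xG * yG ≠ yG * xG := ne_aux x_mem y_mem xy_ne
theorem xG_pow : xG ^ 9 = 1 := Subtype.ext x_pow
theorem yG_pow : yG ^ 2 = 1 := Subtype.ext y_pow
theorem xyG_pow : (xG * yG) ^ 4 = 1 := Subtype.ext xy_pow
theorem oddG_pow : ((xG * yG) * (xG ^ 2 * yG) * (xG ^ 4 * yG)) ^ 9 = 1 := Subtype.ext odd_pow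

theorem comm_aux {A : Type*} [CommGroup A] (a b : A) (h1 : a ^ 9 = 1) (h2 : b ^ 2 = 1)
    (h3 : (a * b) ^ 4 = 1) (h4 : ((a * b) * (a ^ 2 * b) * (a ^ 4 * b)) ^ 9 = 1) :
    a = 1 ∧ b = 1 := by
  have e1 : a ^ 4 = 1 := by
    have : (a * b) ^ 4 = a ^ 4 * (b ^ 2) ^ 2 := by rw [mul_pow, ← pow_mul]
    rw [h3, h2] at this
    simpa using this.symm
  have ha : a = 1 := by
    have : a ^ 9 = (a ^ 4) ^ 2 * a := by rw [← pow_mul, ← pow_succ]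
    rw [h1, e1] at this
    simpa using this.symm
  refine ⟨ha, ?_⟩
  rw [ha] at h4
  have : ((1 * b) * (1 ^ 2 * b) * (1 ^ 4 * b)) ^ 9 = (b ^ 2) ^ 13 * b := by
    simp only [one_pow, one_mul]
    rw [← pow_two, ← pow_succ, ← pow_mul, ← pow_mul, ← pow_succ]
  rw [h4, h2] at this
  simpa using this.symm

theorem perfect : commutator GG = ⊤ := by
  rw [← Abelianization.ker_of]
  obtain ⟨ha, hb⟩ := comm_aux (Abelianization.of xG) (Abelianization.of yG)
    (by rw [← map_pow, xG_pow, map_one]) (by rw [← map_pow, yG_pow, map_one])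
    (by rw [← map_mul, ← map_pow, xyG_pow, map_one])
    (by simp only [← map_mul, ← map_pow, oddG_pow, map_one])
  exact eq_top_of (MonoidHom.mem_ker.2 ha) (MonoidHom.mem_ker.2 hb)

def TT (p : Fin 135) : Subgroup GG where
  carrier := {g | CT p g.1}
  one_mem' := CT.one p
  mul_mem' := fun h1 h2 => CT.mul h1 h2
  inv_mem' := fun h => CT.inv h

theorem mem_TT {p : Fin 135} {g : GG} : g ∈ TT p ↔ CT p g.1 := Iff.rfl

theorem TT_conj (g : GG) (p : Fin 135) (h : GG) (hh : h ∈ TT p) : g * h * g⁻¹ ∈ TT (g • p) :=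
  CT.conj hh g.2

open scoped Pointwise in
theorem TT_smul (g : GG) (p : Fin 135) : TT (g • p) = MulAut.conj g • TT p := by
  ext h
  rw [Subgroup.mem_pointwise_smul_iff_inv_smul_mem]
  constructor
  · intro hh
    have := TT_conj g⁻¹ _ h hh
    rw [inv_smul_smul, inv_inv] at this
    rw [← map_inv, MulAut.smul_def, MulAut.conj_apply, inv_inv]
    exact this
  · intro hh
    rw [← map_inv, MulAut.smul_def, MulAut.conj_apply, inv_inv] at hh
    have := TT_conj g p _ hh
    have e : g * (g⁻¹ * h * g) * g⁻¹ = h := by group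
    rwa [e] at this

theorem TT_gen : iSup TT = ⊤ := by
  have hy : yG ∈ iSup TT := Subgroup.mem_iSup_of_mem 1 (mem_TT.2 CT_y)
  have hc : ∀ g : GG, g * yG * g⁻¹ ∈ iSup TT := fun g =>
    Subgroup.mem_iSup_of_mem (g • (1 : Fin 135)) (TT_conj g 1 yG CT_y)
  refine eq_top_of ?_ hy
  have e : ∀ a b : GG, a ^ 4 = ((a * b * a⁻¹) * (a ^ 2 * b * (a ^ 2)⁻¹) * (a ^ 3 * b * (a ^ 3)⁻¹) *
      (a ^ 4 * b * (a ^ 4)⁻¹))⁻¹ * (a * b) ^ 4 := by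
    intro a b
    simp only [pow_succ, pow_zero, one_mul, mul_inv_rev, inv_inv, mul_assoc, inv_mul_cancel_left,
      inv_mul_cancel, mul_one]
  have h4 : xG ^ 4 ∈ iSup TT := by
    rw [e xG yG, xyG_pow, mul_one]
    exact Subgroup.inv_mem _ (Subgroup.mul_mem _ (Subgroup.mul_mem _ (Subgroup.mul_mem _
      (hc _) (hc _)) (hc _)) (hc _))
  have h5 : xG = (xG ^ 4) ^ 7 := by
    have : (xG ^ 4) ^ 7 = (xG ^ 9) ^ 3 * xG := by rw [← pow_mul, ← pow_mul, ← pow_succ]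
    rw [this, xG_pow, one_pow, one_mul]
  rw [h5]
  exact Subgroup.pow_mem _ h4 7

theorem simpleGG : IsSimpleGroup GG := by
  have hp : MulAction.IsPreprimitive GG (Fin 135) :=
    { toIsPretransitive := pretrans, isTrivialBlock_of_isBlock := fun {B} hB => block_trivial B hB }
  have hn : Nontrivial GG := ⟨xG * yG, yG * xG, xyG_ne⟩
  let I : MulAction.IwasawaStructure GG (Fin 135) :=
    { T := TT
      is_comm := fun p => ⟨⟨fun a b => Subtype.ext (Subtype.ext (CT.comm' a.2 b.2))⟩⟩
      is_conj := TT_smul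
      is_generator := TT_gen }
  exact I.isSimpleGroup perfect inferInstance

theorem almost_simple : ∃ S : Subgroup GG, S.Normal ∧ IsSimpleGroup S ∧
    (∃ a b : S, a * b ≠ b * a) ∧ Subgroup.centralizer (S : Set GG) = ⊥ := by
  have hs := simpleGG
  have hne : xG * yG ≠ yG * xG := xyG_ne
  refine ⟨⊤, inferInstance, ?_, ?_, ?_⟩
  · exact (MulEquiv.isSimpleGroup_congr Subgroup.topEquiv).2 hs
  · exact ⟨⟨xG, trivial⟩, ⟨yG, trivial⟩, ne_aux (Subgroup.mem_top _) (Subgroup.mem_top _) hne⟩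
  · rw [Subgroup.coe_top, Subgroup.centralizer_univ]
    rcases (inferInstance : (Subgroup.center GG).Normal).eq_bot_or_eq_top with h | h
    · exact h
    · exfalso
      have : xG ∈ Subgroup.center GG := by rw [h]; trivial
      exact hne (Subgroup.mem_center_iff.1 this yG).symm

/-! ### Rigidity -/

def qq (a : ℕ) : Bool := bitB tPar (Nat.land (Nat.shiftRight a 4) (Nat.land a 15))
def swp (a : ℕ) : ℕ := Nat.lor (Nat.shiftRight a 4) (Nat.shiftLeft (Nat.land a 15) 4)
def bl (u v : ℕ) : Bool := bitB tPar (Nat.land u (swp v))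
/-- The reflection in the nonsingular vector `a`. -/
def rf (a i : ℕ) : ℕ := cond (bl (Ap tVec i) a) (Ap tIdx (Nat.xor (Ap tVec i) a)) i
def okP (a b : ℕ) : Bool :=
  cond (qq a) (cond (qq b) (cond (bl a b) false (not (Nat.beq a b))) false) false

def linCheck (T L : ℕ) : Bool := allB 256 fun a => impB (qq a) (allB 135 fun i =>
  cond (Nat.ble (rf a i) 134) (Nat.beq (Ap T (rf a i)) (rf (Ap L a) (Ap T i))) false)
def okCheck (L : ℕ) : Bool := allB 256 fun a => impB (qq a) (allB 256 fun b =>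
  impB (okP a b) (okP (Ap L a) (Ap L b)))

theorem linCheck_x : linCheck tX tXL = true := by decide +kernel
theorem linCheck_y : linCheck tY tYL = true := by decide +kernel
theorem okCheck_x : okCheck tXL = true := by decide +kernel
theorem okCheck_y : okCheck tYL = true := by decide +kernel

def YC (s : Equiv.Perm (Fin 135)) : Prop :=
  ∃ a b, a < 256 ∧ b < 256 ∧ okP a b = true ∧ RepP s (fun i => rf a (rf b i))

theorem okP_q {a b : ℕ} (h : okP a b = true) : qq a = true ∧ qq b = true := by
  cases h1 : qq a with
  | false => simp [okP, h1] at h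
  | true =>
    cases h2 : qq b with
    | false => simp [okP, h1, h2] at h
    | true => exact ⟨rfl, rfl⟩

theorem lin_spec {T L : ℕ} (h : linCheck T L = true) {a : ℕ} (ha : a < 256) (hq : qq a = true)
    {i : ℕ} (hi : i < 135) : rf a i < 135 ∧ Ap T (rf a i) = rf (Ap L a) (Ap T i) := by
  have h1 := allB_spec (impB_spec (allB_spec h a ha) hq) i hi
  cases h2 : Nat.ble (rf a i) 134 with
  | false => simp [h2] at h1
  | true =>
    simp only [h2, cond_true] at h1
    have := Nat.le_of_ble_eq_true h2
    exact ⟨by omega, beq_spec h1⟩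

theorem YC_conj {u : Equiv.Perm (Fin 135)} {T L : ℕ} (hu : RepP u (Ap T))
    (h1 : linCheck T L = true) (h2 : okCheck L = true) (s : Equiv.Perm (Fin 135)) (hs : YC s) :
    YC (u * s * u⁻¹) := by
  obtain ⟨a, b, ha, hb, hab, hr⟩ := hs
  obtain ⟨qa, qb⟩ := okP_q hab
  refine ⟨Ap L a, Ap L b, Nat.mod_lt _ (by decide), Nat.mod_lt _ (by decide),
    impB_spec (allB_spec (impB_spec (allB_spec h2 a ha) qa) b hb) hab, ?_⟩
  intro i
  obtain ⟨j, rfl⟩ := u.surjective i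
  show (u (s (u⁻¹ (u j)))).val = rf (Ap L a) (rf (Ap L b) (u j).val)
  obtain ⟨l1, l2⟩ := lin_spec h1 hb qb j.isLt
  obtain ⟨_, l4⟩ := lin_spec h1 ha qa l1
  rw [pinv_self, hu, hr, hu j, l4, l2]

theorem YC_GG : ∀ g ∈ GG, ∀ s, YC s → YC (g * s * g⁻¹) := by
  apply gen_induction
  · intro s hs; simpa using hs
  · exact YC_conj rep_x linCheck_x okCheck_x
  · exact YC_conj rep_y linCheck_y okCheck_y
  · intro g h hg hh s hs
    have e : g * h * s * (g * h)⁻¹ = g * (h * s * h⁻¹) * g⁻¹ := by group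
    rw [e]; exact hg _ (hh _ hs)

theorem YC_y : YC y :=
  ⟨142, 158, by decide, by decide, by decide +kernel, rep_y.congr (by decide +kernel)⟩

def cF (m k i : ℕ) : ℕ := itA (Ap tX) m (itA (Ap tD) k i)

def pairCheck (a b : ℕ) : Bool :=
  cond (anyB 135 fun i =>
    not (Nat.beq (itA (fun j => Ap tX (rf a (rf b j))) 4 i) i)) true
  (cond (anyB 9 fun m => anyB 3 fun k => allB 135 fun i =>
    Nat.beq (rf a (rf b (cF m k i))) (cF m k (Ap tY i))) true
  (anyB 15 fun c => allB 135 fun i => impB (Nat.beq (Ap tCyc i) c)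
    (Nat.beq (Ap tCyc (rf a (rf b i))) c)))

def mainCheck : Bool := allB 256 fun a => impB (qq a) (allB 256 fun b =>
  impB (okP a b) (pairCheck a b))

theorem mainCheck_eq : mainCheck = true := by decide +kernel

def cycCheck : Bool := allB 135 fun i => Nat.beq (Ap tCyc (Ap tX i)) (Ap tCyc i)
theorem cycCheck_eq : cycCheck = true := by decide +kernel

def fibCheck : Bool := allB 15 fun c => cond (anyB 135 fun i => Nat.beq (Ap tCyc i) c)
  (anyB 135 fun i => not (Nat.beq (Ap tCyc i) c)) false
theorem fibCheck_eq : fibCheck = true := by decide +kernel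

theorem fib (c : ℕ) (hc : c < 15) :
    (∃ i : Fin 135, Ap tCyc i = c) ∧ ∃ i : Fin 135, Ap tCyc i ≠ c := by
  have h := allB_spec fibCheck_eq c hc
  cases h1 : anyB 135 fun i => Nat.beq (Ap tCyc i) c with
  | false => simp [h1] at h
  | true =>
    simp only [h1, cond_true] at h
    obtain ⟨i, hi, e⟩ := anyB_spec h1
    obtain ⟨j, hj, e'⟩ := anyB_spec h
    refine ⟨⟨⟨i, hi⟩, beq_spec e⟩, ⟨⟨j, hj⟩, ?_⟩⟩
    intro e2
    have e3 : Ap tCyc j = c := e2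
    simp [e3] at e'

theorem cent_pow (m k : ℕ) : (x ^ m * eD ^ k) * x = x * (x ^ m * eD ^ k) := by
  have h1 : Commute eD x := eD_comm
  exact ((Commute.refl x).pow_left m).mul_left (h1.pow_left k)

theorem main_cases (s : Equiv.Perm (Fin 135)) (hs : YC s) (h4 : (x * s) ^ 4 = 1) :
    (∃ c ∈ GG, c * x = x * c ∧ s * c = c * y) ∨
    ∃ c < 15, ∀ i : Fin 135, Ap tCyc i = c → Ap tCyc (s i) = c := by
  obtain ⟨a, b, ha, hb, hab, hr⟩ := hs
  have h := impB_spec (allB_spec (impB_spec (allB_spec mainCheck_eq a ha) (okP_q hab).1) b hb) hab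
  have ht := (rep_x.mul hr).pow 4
  unfold pairCheck at h
  cases h1 : anyB 135 fun i => not (Nat.beq (itA (fun j => Ap tX (rf a (rf b j))) 4 i) i) with
  | true =>
    exfalso
    obtain ⟨i, hi, e⟩ := anyB_spec h1
    have := ht ⟨i, hi⟩
    rw [h4] at this
    have e1 : i = itA (fun j => Ap tX (rf a (rf b j))) 4 i := this
    rw [← e1, Nat.beq_refl] at e
    exact absurd e (by decide)
  | false =>
    rw [h1, cond_false] at h
    cases h2 : anyB 9 fun m => anyB 3 fun k => allB 135 fun i =>
      Nat.beq (rf a (rf b (cF m k i))) (cF m k (Ap tY i)) with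
    | true =>
      left
      obtain ⟨m, _, h3⟩ := anyB_spec h2
      obtain ⟨k, _, h3⟩ := anyB_spec h3
      refine ⟨x ^ m * eD ^ k, GG.mul_mem (GG.pow_mem x_mem m) (GG.pow_mem eD_mem k),
        cent_pow m k, ?_⟩
      have hc := (rep_x.pow m).mul (rep_eD.pow k)
      exact (hr.mul hc).ext (hc.mul rep_y) h3
    | false =>
      right
      rw [h2, cond_false] at h
      obtain ⟨c, hc, h⟩ := anyB_spec h
      refine ⟨c, hc, fun i hi => ?_⟩
      rw [hr i]
      exact beq_spec (impB_spec (allB_spec h i.val i.isLt) (by rw [hi, Nat.beq_refl]))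

theorem conj_app (g u : Equiv.Perm (Fin 135)) (i : Fin 135) :
    (g * u * g⁻¹) i = g (u (g⁻¹ i)) := rfl

theorem intrans {x' y' g : Equiv.Perm (Fin 135)} (hg : g * x * g⁻¹ = x')
    (hG : Subgroup.closure {x', y'} = GG) (c : ℕ) (hc : c < 15)
    (h : ∀ i : Fin 135, Ap tCyc i = c → Ap tCyc ((g⁻¹ * y' * g) i) = c) : False := by
  have key : ∀ k ∈ Subgroup.closure {x', y'}, ∀ i : Fin 135,
      Ap tCyc (g⁻¹ i) = c → Ap tCyc (g⁻¹ (k i)) = c := by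
    apply gen_induction
    · intro i hi
      exact hi
    · intro i hi
      rw [← hg, conj_app, pinv_self, rep_x, beq_spec (allB_spec cycCheck_eq _ (g⁻¹ i).isLt)]
      exact hi
    · intro i hi
      have := h _ hi
      have e : (g⁻¹ * y' * g) (g⁻¹ i) = g⁻¹ (y' i) := by
        show g⁻¹ (y' (g (g⁻¹ i))) = _
        rw [pself_inv]
      rw [e] at this
      exact this
    · intro k l hk hl i hi
      exact hk _ (hl _ hi)
  obtain ⟨⟨i, hi⟩, ⟨j, hj⟩⟩ := fib c hc
  obtain ⟨k, hk, e⟩ := trans2 (g i) (g j)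
  rw [← hG] at hk
  have := key k hk (g i) (by rw [pinv_self]; exact hi)
  rw [e, pinv_self] at this
  exact hj this

theorem grp_aux1 {G : Type*} [Group G] (x y x' y' z' g l : G) (h1 : x' * y' * z' = 1)
    (h2 : g * x * g⁻¹ = x') (h3 : l * (x * y)⁻¹ * l⁻¹ = z') (h4 : (x * y) ^ 4 = 1) :
    (x * (g⁻¹ * y' * g)) ^ 4 = 1 := by
  have e1 : x' * y' = l * (x * y) * l⁻¹ := by
    rw [mul_eq_one_iff_eq_inv] at h1
    rw [h1, ← h3]; group
  have e2 : x * (g⁻¹ * y' * g) = (g⁻¹ * l) * (x * y) * (g⁻¹ * l)⁻¹ := by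
    have : x * (g⁻¹ * y' * g) = g⁻¹ * (x' * y') * g := by rw [← h2]; group
    rw [this, e1]; group
  rw [e2, conj_pow, h4]; simp

theorem grp_aux2 {G : Type*} [Group G] (x y x' y' z' g c : G) (h1 : x' * y' * z' = 1)
    (h2 : g * x * g⁻¹ = x') (h3 : c * x = x * c) (h4 : (g⁻¹ * y' * g) * c = c * y) :
    (g * c) * x * (g * c)⁻¹ = x' ∧ (g * c) * y * (g * c)⁻¹ = y' ∧
      (g * c) * (x * y)⁻¹ * (g * c)⁻¹ = z' := by
  have e1 : (g * c) * x * (g * c)⁻¹ = x' := by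
    have : (g * c) * x * (g * c)⁻¹ = g * (c * x) * c⁻¹ * g⁻¹ := by group
    rw [this, h3, ← h2]; group
  have e2 : (g * c) * y * (g * c)⁻¹ = y' := by
    have : (g * c) * y * (g * c)⁻¹ = g * (c * y) * c⁻¹ * g⁻¹ := by group
    rw [this, ← h4]; group
  refine ⟨e1, e2, ?_⟩
  have e3 : z' = (x' * y')⁻¹ := eq_inv_of_mul_eq_one_right h1
  rw [e3, ← e1, ← e2]; group

theorem grp_aux3 {G : Type*} [Group G] (y y' g k : G) (h : k * y * k⁻¹ = y') :
    g⁻¹ * y' * g = (g⁻¹ * k) * y * (g⁻¹ * k)⁻¹ := by rw [← h]; group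

theorem rigid (x' y' z' : Equiv.Perm (Fin 135)) (h1 : x' * y' * z' = 1)
    (hG : Subgroup.closure {x', y'} = GG)
    (hx : ∃ g ∈ GG, g * x * g⁻¹ = x') (hy : ∃ g ∈ GG, g * y * g⁻¹ = y')
    (hz : ∃ g ∈ GG, g * (x * y)⁻¹ * g⁻¹ = z') :
    ∃ g ∈ GG, g * x * g⁻¹ = x' ∧ g * y * g⁻¹ = y' ∧ g * (x * y)⁻¹ * g⁻¹ = z' := by
  obtain ⟨g, hg, ex⟩ := hx
  obtain ⟨k, hk, ey⟩ := hy
  obtain ⟨l, hl, ez⟩ := hz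
  have hs : YC (g⁻¹ * y' * g) := by
    rw [grp_aux3 y y' g k ey]
    exact YC_GG _ (GG.mul_mem (GG.inv_mem hg) hk) _ YC_y
  rcases main_cases _ hs (grp_aux1 x y x' y' z' g l h1 ex ez xy_pow) with ⟨c, hc, e1, e2⟩ | ⟨c, hc, h⟩
  · exact ⟨g * c, GG.mul_mem hg hc, grp_aux2 x y x' y' z' g c h1 ex e1 e2⟩
  · exact (intrans ex hG c hc h).elim

/-! ### The main theorem -/

theorem ne_top : GG ≠ ⊤ := by
  intro h
  have h1 := card_GG
  rw [h, Subgroup.card_top, Nat.card_eq_fintype_card, Fintype.card_perm, Fintype.card_fin] at h1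
  have h2 : Nat.factorial 13 ∣ Nat.factorial 135 := Nat.factorial_dvd_factorial (by norm_num)
  rw [h1] at h2
  revert h2
  decide +kernel

theorem ne_alt : GG ≠ alternatingGroup (Fin 135) := by
  intro h
  have h1 := card_GG
  have h0 : 2 * Nat.card (alternatingGroup (Fin 135)) = Nat.card (Equiv.Perm (Fin 135)) :=
    two_mul_nat_card_alternatingGroup
  rw [← h, h1, Nat.card_eq_fintype_card, Fintype.card_perm, Fintype.card_fin] at h0
  have h2 : Nat.factorial 13 ∣ Nat.factorial 135 := Nat.factorial_dvd_factorial (by norm_num)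
  rw [← h0] at h2
  revert h2
  decide +kernel

theorem permInd_eq {s : Equiv.Perm (Fin 135)} {m : Multiset ℕ} (h : s.cycleType = m) (a b c : ℕ)
    (h1 : m.sum = a) (h2 : Multiset.card m = b) (h3 : a - b = c) : permInd s = c := by
  rw [← h3, ← h1, ← h2, ← h, permInd]

theorem genus : permInd x + permInd y + permInd (x * y)⁻¹ = 2 * (135 - 1) := by
  rw [permInd_eq cycleType_x 135 15 120 (by simp) (by simp) rfl,
    permInd_eq cycleType_y 104 52 52 (by simp) (by simp) rfl,
    permInd_eq cycleType_z 132 36 96 (by simp) (by simp) rfl]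

theorem nice_triple_deg135_stmt11 :
    IsNice x y (x * y)⁻¹ ∧
    x.cycleType = Multiset.replicate 15 9 ∧
    y.cycleType = Multiset.replicate 52 2 ∧
    ((x * y)⁻¹).cycleType = Multiset.replicate 30 4 + Multiset.replicate 6 2 ∧
    Nat.card ↥(Subgroup.closure {x, y} : Subgroup (Equiv.Perm (Fin 135))) = 174182400 := by
  refine ⟨⟨mul_inv_cancel _, ⟨ne_alt, ne_top⟩, ⟨pretrans, block_trivial⟩, almost_simple, genus,
    rigid, ?_⟩, cycleType_x, cycleType_y, cycleType_z, card_GG⟩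
  intro g hg k hk
  rcases hg with hg | hg | hg
  · rw [hg] at hk ⊢
    rw [order_x] at hk
    exact rat_x k hk
  · rw [hg] at hk ⊢
    rw [order_y] at hk
    exact rat_y k hk
  · rw [Set.mem_singleton_iff] at hg
    rw [hg] at hk ⊢
    rw [order_z] at hk
    exact rat_z k hk
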